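/- arXiv:math/9912221 — 4 statements merged into one kernel-verified Lean document; each statement's English description precedes it below -/
import Mathlib

section
/- A ring R is left coherent if and only if the wide subcategory of left R-modules generated by R consists exactly of the finitely presented R-modules. -/
open CategoryTheory CategoryTheory.Limits CategoryTheory.Pretriangulated ZeroObject

universe w u

/-- A full subcategory (given as a set of objects) of an abelian category is *wide*
if it is closed under isomorphisms, kernels, cokernels and extensions. -/
structure IsWideSubcategory {A : Type*} [Category A] [Abelian A] (C : Set A) : Prop where
  mem_of_iso : ∀ {X Y : A}, (X ≅ Y) → X ∈ C → Y ∈ C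
  kernel_mem : ∀ {X Y : A} (f : X ⟶ Y), X ∈ C → Y ∈ C → kernel f ∈ C
  cokernel_mem : ∀ {X Y : A} (f : X ⟶ Y), X ∈ C → Y ∈ C → cokernel f ∈ C
  extension_mem : ∀ (S : CategoryTheory.ShortComplex A), S.ShortExact →
    S.X₁ ∈ C → S.X₃ ∈ C → S.X₂ ∈ C

/-- The wide subcategory generated by a set of objects: the intersection of all
wide subcategories containing it. -/
def wideClosure {A : Type*} [Category A] [Abelian A] (S : Set A) : Set A :=
  ⋂₀ {C : Set A | IsWideSubcategory C ∧ S ⊆ C}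

/-- `C₀`, the wide subcategory of `R`-modules generated by the module `R`. -/
def wideSubcatGenByRing (R : Type u) [Ring R] : Set (ModuleCat.{u} R) :=
  wideClosure {ModuleCat.of R R}

/-- A ring is left coherent if every finitely generated left ideal is finitely
presented as a module. -/
def IsLeftCoherentRing (R : Type u) [Ring R] : Prop :=
  ∀ I : Ideal R, I.FG → Module.FinitePresentation R I

/-- The collection of finitely presented `R`-modules. -/
def finPresModules (R : Type u) [Ring R] : Set (ModuleCat.{u} R) :=
  {M : ModuleCat.{u} R | Module.FinitePresentation R M}

/-!
The finitely presented modules contain `R` and lie in every wide subcategory containing `R`, being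
cokernels of maps between finite free modules. So the wide closure of `R` equals the class of
finitely presented modules if and only if that class is wide, and only closure under kernels is in
doubt. If the class is closed under kernels, then a finitely generated left ideal `I` is finitely
presented, as the kernel of `R → R ⧸ I`. Conversely, the property that every finitely generated
submodule is finitely presented passes from `R` to finite free modules and then to quotients by
finitely generated submodules, hence to all finitely presented modules. The image and then the
kernel of a map of such modules are therefore finitely presented.
-/

section PseudoCoherent

/-- A module is *pseudo-coherent* in the sense of Bourbaki if each of its finitely generated
submodules is finitely presented; unlike for coherent modules, the module itself need not be
finitely generated. `IsLeftCoherentRing R` unfolds to `IsPseudoCoherentModule R R`. -/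
def IsPseudoCoherentModule (R M : Type*) [Ring R] [AddCommGroup M] [Module R M] : Prop :=
  ∀ L : Submodule R M, L.FG → Module.FinitePresentation R L

variable {R : Type*} [Ring R] {M N : Type*} [AddCommGroup M] [Module R M] [AddCommGroup N]
  [Module R N]

namespace IsPseudoCoherentModule

lemma finitePresentation_of_injective [Module.Finite R M] (hN : IsPseudoCoherentModule R N)
    (f : M →ₗ[R] N) (hf : Function.Injective f) : Module.FinitePresentation R M :=
  (LinearEquiv.ofInjective f hf).finitePresentation_iff.mpr (hN _ (Submodule.fg_range f))

lemma of_injective (hN : IsPseudoCoherentModule R N) (f : M →ₗ[R] N)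
    (hf : Function.Injective f) : IsPseudoCoherentModule R M := fun L hL ↦
  have : Module.Finite R L := .of_fg hL
  hN.finitePresentation_of_injective (f ∘ₗ L.subtype) (hf.comp L.subtype_injective)

lemma of_ker (f : M →ₗ[R] N) (hker : IsPseudoCoherentModule R (LinearMap.ker f))
    (hN : IsPseudoCoherentModule R N) : IsPseudoCoherentModule R M := by
  intro L hL
  let g : L →ₗ[R] L.map f := f.submoduleMap L
  have hg : Function.Surjective g := f.submoduleMap_surjective L
  have : Module.Finite R L := .of_fg hL
  have : Module.FinitePresentation R (L.map f) := hN _ (hL.map f)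
  have : Module.Finite R (LinearMap.ker g) := .of_fg (Module.FinitePresentation.fg_ker g hg)
  let i : LinearMap.ker g →ₗ[R] LinearMap.ker f :=
    L.subtype.restrict fun _ hx ↦ congrArg Subtype.val hx
  have hi : Function.Injective i := fun _ _ h ↦
    Subtype.ext (L.subtype_injective (congrArg (LinearMap.ker f).subtype h))
  have : Module.FinitePresentation R (LinearMap.ker g) := hker.finitePresentation_of_injective i hi
  exact Module.finitePresentation_of_ker g hg

lemma of_surjective (hM : IsPseudoCoherentModule R M) (f : M →ₗ[R] N)
    (hf : Function.Surjective f) (hker : (LinearMap.ker f).FG) : IsPseudoCoherentModule R N := by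
  intro L hL
  have hcomap : (L.comap f).FG := by
    apply Submodule.fg_of_fg_map_of_fg_inf_ker f
    · rwa [Submodule.map_comap_eq_of_surjective hf]
    · rwa [inf_eq_right.mpr (LinearMap.ker_le_comap f)]
  have : Module.FinitePresentation R (L.comap f) := hM _ hcomap
  have hmap : (LinearMap.ker (f.submoduleComap L)).map (L.comap f).subtype = LinearMap.ker f := by
    rw [LinearMap.submoduleComap, LinearMap.ker_restrict, Submodule.map_comap_subtype,
      inf_eq_right.mpr (LinearMap.ker_le_comap f)]
  have hker' : (LinearMap.ker (f.submoduleComap L)).FG :=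
    Submodule.fg_of_fg_map_injective _ (Submodule.subtype_injective _) (hmap ▸ hker)
  exact Module.finitePresentation_of_surjective (f.submoduleComap L)
    (f.submoduleComap_surjective_of_surjective L hf) hker'

lemma prod (hM : IsPseudoCoherentModule R M) (hN : IsPseudoCoherentModule R N) :
    IsPseudoCoherentModule R (M × N) := by
  have hsnd : Function.Injective (LinearMap.snd R M N ∘ₗ (LinearMap.ker (.fst R M N)).subtype) :=
    fun x y h ↦ Subtype.ext (Prod.ext (x.2.trans y.2.symm) h)
  exact of_ker (.fst R M N) (hN.of_injective _ hsnd) hM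

lemma pi {ι : Type*} [Finite ι] {M : ι → Type*} [∀ i, AddCommGroup (M i)]
    [∀ i, Module R (M i)] (hM : ∀ i, IsPseudoCoherentModule R (M i)) :
    IsPseudoCoherentModule R (∀ i, M i) :=
  Module.pi_induction' R (motive := fun N _ _ ↦ IsPseudoCoherentModule R N)
    (motive' := fun N _ _ ↦ IsPseudoCoherentModule R N)
    (fun e hN ↦ hN.of_injective e.symm.toLinearMap e.symm.injective)
    (fun e hN ↦ hN.of_injective e.symm.toLinearMap e.symm.injective)
    (fun _ _ ↦ inferInstance) prod M hM

lemma finitePresentation_ker [Module.Finite R M] (hM : IsPseudoCoherentModule R M)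
    (hN : IsPseudoCoherentModule R N) (f : M →ₗ[R] N) :
    Module.FinitePresentation R (LinearMap.ker f) := by
  have : Module.FinitePresentation R (LinearMap.range f) := hN _ (Submodule.fg_range f)
  have hker : (LinearMap.ker f.rangeRestrict).FG :=
    Module.FinitePresentation.fg_ker _ f.surjective_rangeRestrict
  exact hM _ (f.ker_rangeRestrict ▸ hker)

end IsPseudoCoherentModule

lemma IsLeftCoherentRing.isPseudoCoherentModule (hR : IsLeftCoherentRing R)
    [Module.FinitePresentation R M] : IsPseudoCoherentModule R M := by
  obtain ⟨n, f, hf⟩ := Module.Finite.exists_fin' R M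
  have hfree : IsPseudoCoherentModule R (Fin n → R) := .pi fun _ ↦ hR
  exact hfree.of_surjective f hf (Module.FinitePresentation.fg_ker f hf)

end PseudoCoherent

section FinitePresentation

variable {R M N P : Type*} [Ring R] [AddCommGroup M] [Module R M] [AddCommGroup N] [Module R N]
  [AddCommGroup P] [Module R P]

lemma finitePresentation_quotient_of_fg [Module.FinitePresentation R M] {L : Submodule R M}
    (hL : L.FG) : Module.FinitePresentation R (M ⧸ L) :=
  Module.finitePresentation_of_surjective L.mkQ L.mkQ_surjective (L.ker_mkQ.symm ▸ hL)

lemma finitePresentation_of_shortExact [Module.FinitePresentation R M]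
    [Module.FinitePresentation R P] {f : M →ₗ[R] N} {g : N →ₗ[R] P} (hf : Function.Injective f)
    (hfg : Function.Exact f g) (hg : Function.Surjective g) : Module.FinitePresentation R N := by
  have : Module.FinitePresentation R (LinearMap.ker g) :=
    .of_equiv (.ofInjective f hf ≪≫ₗ .ofEq _ _ hfg.linearMap_ker_eq.symm)
  exact Module.finitePresentation_of_ker g hg

end FinitePresentation

section WideClosure

variable {A : Type*} [Category A] [Abelian A]

lemma isWideSubcategory_sInter {𝒞 : Set (Set A)} (h𝒞 : ∀ C ∈ 𝒞, IsWideSubcategory C) :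
    IsWideSubcategory (⋂₀ 𝒞) where
  mem_of_iso e hX C hC := (h𝒞 C hC).mem_of_iso e (hX C hC)
  kernel_mem f hX hY C hC := (h𝒞 C hC).kernel_mem f (hX C hC) (hY C hC)
  cokernel_mem f hX hY C hC := (h𝒞 C hC).cokernel_mem f (hX C hC) (hY C hC)
  extension_mem S hS h₁ h₃ C hC := (h𝒞 C hC).extension_mem S hS (h₁ C hC) (h₃ C hC)

lemma isWideSubcategory_wideClosure (S : Set A) : IsWideSubcategory (wideClosure S) :=
  isWideSubcategory_sInter fun _ hC ↦ hC.1

lemma subset_wideClosure (S : Set A) : S ⊆ wideClosure S :=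
  Set.subset_sInter fun _ hC ↦ hC.2

lemma wideClosure_subset {S C : Set A} (hC : IsWideSubcategory C) (hSC : S ⊆ C) :
    wideClosure S ⊆ C :=
  Set.sInter_subset_of_mem ⟨hC, hSC⟩

lemma wideClosure_eq_iff_isWideSubcategory {S C : Set A} (hSC : S ⊆ C) (hCS : C ⊆ wideClosure S) :
    wideClosure S = C ↔ IsWideSubcategory C :=
  ⟨fun h ↦ h ▸ isWideSubcategory_wideClosure S, fun hC ↦ (wideClosure_subset hC hSC).antisymm hCS⟩

namespace IsWideSubcategory

variable {C : Set A}

lemma mem_of_isZero (hC : IsWideSubcategory C) (hne : C.Nonempty) {Z : A} (hZ : IsZero Z) :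
    Z ∈ C := by
  obtain ⟨X, hX⟩ := hne
  exact hC.mem_of_iso ((isZero_kernel_of_mono (𝟙 X)).iso hZ) (hC.kernel_mem (𝟙 X) hX hX)

lemma biprod_mem (hC : IsWideSubcategory C) {X Y : A} (hX : X ∈ C) (hY : Y ∈ C) :
    (X ⊞ Y : A) ∈ C :=
  hC.extension_mem _ (ShortComplex.Splitting.ofHasBinaryBiproduct X Y).shortExact hX hY

end IsWideSubcategory

end WideClosure

section Modules

variable {R : Type u} [Ring R]

namespace IsWideSubcategory

variable {C : Set (ModuleCat.{w} R)}

lemma of_pi_mem (hC : IsWideSubcategory C) (hne : C.Nonempty) {ι : Type} [Finite ι]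
    {M : ι → Type w} [∀ i, AddCommGroup (M i)] [∀ i, Module R (M i)]
    (hM : ∀ i, ModuleCat.of R (M i) ∈ C) : ModuleCat.of R (∀ i, M i) ∈ C :=
  Module.pi_induction' R (motive := fun N _ _ ↦ ModuleCat.of R N ∈ C)
    (motive' := fun N _ _ ↦ ModuleCat.of R N ∈ C)
    (fun e ↦ hC.mem_of_iso e.toModuleIso) (fun e ↦ hC.mem_of_iso e.toModuleIso)
    (hC.mem_of_isZero hne (ModuleCat.isZero_of_subsingleton _))
    (fun hM hN ↦ hC.mem_of_iso (ModuleCat.biprodIsoProd _ _) (hC.biprod_mem hM hN)) M hM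

variable {M N P : Type w} [AddCommGroup M] [Module R M] [AddCommGroup N] [Module R N]
  [AddCommGroup P] [Module R P]

lemma of_ker_mem (hC : IsWideSubcategory C) (f : M →ₗ[R] N) (hM : ModuleCat.of R M ∈ C)
    (hN : ModuleCat.of R N ∈ C) : ModuleCat.of R (LinearMap.ker f) ∈ C :=
  hC.mem_of_iso (ModuleCat.kernelIsoKer (ModuleCat.ofHom f)) (hC.kernel_mem _ hM hN)

lemma of_mem_of_exact_of_surjective (hC : IsWideSubcategory C) {f : M →ₗ[R] N} {g : N →ₗ[R] P}
    (hfg : Function.Exact f g) (hg : Function.Surjective g) (hM : ModuleCat.of R M ∈ C)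
    (hN : ModuleCat.of R N ∈ C) : ModuleCat.of R P ∈ C :=
  let e : cokernel (ModuleCat.ofHom f) ≅ ModuleCat.of R P :=
    (cokernelIsCokernel _).coconePointUniqueUpToIso
      (ModuleCat.isColimitCokernelCofork (ModuleCat.ofHom f) (ModuleCat.ofHom g) hfg hg)
  hC.mem_of_iso e (hC.cokernel_mem _ hM hN)

lemma finPresModules_subset {C : Set (ModuleCat.{u} R)} (hC : IsWideSubcategory C)
    (hR : ModuleCat.of R R ∈ C) : finPresModules R ⊆ C := by
  intro M hM
  have : Module.FinitePresentation R M := hM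
  obtain ⟨n, m, f, g, hf, hgf⟩ := Module.FinitePresentation.exists_fin' R M
  have hfree (k : ℕ) : ModuleCat.of R (Fin k → R) ∈ C := hC.of_pi_mem ⟨_, hR⟩ fun _ ↦ hR
  exact hC.of_mem_of_exact_of_surjective hgf hf (hfree m) (hfree n)

end IsWideSubcategory

lemma isWideSubcategory_finPresModules (hR : IsLeftCoherentRing R) :
    IsWideSubcategory (finPresModules R) where
  mem_of_iso e (_ : Module.FinitePresentation R _) :=
    Module.FinitePresentation.of_equiv e.toLinearEquiv
  kernel_mem f (_ : Module.FinitePresentation R _) (_ : Module.FinitePresentation R _) :=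
    (ModuleCat.kernelIsoKer f).toLinearEquiv.finitePresentation_iff.mpr
      (hR.isPseudoCoherentModule.finitePresentation_ker hR.isPseudoCoherentModule f.hom)
  cokernel_mem f (_ : Module.FinitePresentation R _) (_ : Module.FinitePresentation R _) :=
    (ModuleCat.cokernelIsoRangeQuotient f).toLinearEquiv.finitePresentation_iff.mpr
      (finitePresentation_quotient_of_fg (Submodule.fg_range f.hom))
  extension_mem S hS (_ : Module.FinitePresentation R _) (_ : Module.FinitePresentation R _) :=
    finitePresentation_of_shortExact (f := S.f.hom) (g := S.g.hom) hS.moduleCat_injective_f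
      ((ShortComplex.ShortExact.moduleCat_exact_iff_function_exact S).mp hS.exact)
      hS.moduleCat_surjective_g

lemma isPseudoCoherentModule_of_isWideSubcategory_finPresModules
    (hwide : IsWideSubcategory (finPresModules R)) {M : Type u} [AddCommGroup M] [Module R M]
    (hM : Module.FinitePresentation R M) : IsPseudoCoherentModule R M := fun L hL ↦
  have hker : Module.FinitePresentation R (LinearMap.ker L.mkQ) :=
    hwide.of_ker_mem L.mkQ hM (finitePresentation_quotient_of_fg hL)
  L.ker_mkQ ▸ hker

lemma isLeftCoherentRing_iff_isWideSubcategory_finPresModules :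
    IsLeftCoherentRing R ↔ IsWideSubcategory (finPresModules R) :=
  ⟨isWideSubcategory_finPresModules, fun hwide ↦
    isPseudoCoherentModule_of_isWideSubcategory_finPresModules hwide inferInstance⟩

end Modules

/-- Lemma 1.6: a ring `R` is left coherent if and only if the wide
subcategory generated by `R` consists exactly of the finitely presented modules. -/
theorem coherent_iff_wideClosure_eq_finPres (R : Type u) [Ring R] :
    IsLeftCoherentRing R ↔ wideSubcatGenByRing R = finPresModules R := by
  have hR : {ModuleCat.of R R} ⊆ finPresModules R :=
    Set.singleton_subset_iff.mpr (inferInstanceAs (Module.FinitePresentation R R))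
  have hfp : finPresModules R ⊆ wideSubcatGenByRing R :=
    (isWideSubcategory_wideClosure _).finPresModules_subset (subset_wideClosure _ rfl)
  calc
    IsLeftCoherentRing R ↔ IsWideSubcategory (finPresModules R) :=
      isLeftCoherentRing_iff_isWideSubcategory_finPresModules
    _ ↔ wideSubcatGenByRing R = finPresModules R :=
      (wideClosure_eq_iff_isWideSubcategory hR hfp).symm
end

section
/- Let R be a commutative ring. Then the map f from the lattice of wide subcategories of C_0 to the lattice of thick subcategories of small objects of D(R) is surjective; equivalently, for every thick subcategory D of small objects of D(R) one has fg(D) = D. -/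
open CategoryTheory CategoryTheory.Limits CategoryTheory.Pretriangulated ZeroObject

universe w u

/-- A thick subcategory of a (pre)triangulated category: a full triangulated
subcategory closed under retracts (direct summands). -/
structure IsThickSubcategory {T : Type*} [Category T] [HasZeroObject T] [Preadditive T]
    [HasShift T ℤ] [∀ n : ℤ, (shiftFunctor T n).Additive] [Pretriangulated T]
    (D : Set T) : Prop where
  mem_of_iso : ∀ {X Y : T}, (X ≅ Y) → X ∈ D → Y ∈ D
  zero_mem : (0 : T) ∈ D
  shift_mem : ∀ (X : T) (n : ℤ), X ∈ D → X⟦n⟧ ∈ D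
  ext₂ : ∀ (T' : Triangle T), T' ∈ (distTriang T) → T'.obj₁ ∈ D → T'.obj₃ ∈ D → T'.obj₂ ∈ D
  retract_mem : ∀ (X Y : T) (i : X ⟶ Y) (r : Y ⟶ X), i ≫ r = 𝟙 X → Y ∈ D → X ∈ D

/-- An object of the derived category of `R`-modules is *small* if it belongs to every
thick subcategory containing the complex `S⁰R` (`R` concentrated in degree `0`), i.e. to
the thick subcategory generated by `S⁰R`; equivalently, `Hom(X,-)` commutes with
arbitrary direct sums. -/
def IsSmallObject {R : Type u} [Ring R] [HasDerivedCategory.{w} (ModuleCat.{u} R)]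
    (X : DerivedCategory (ModuleCat.{u} R)) : Prop :=
  ∀ D : Set (DerivedCategory (ModuleCat.{u} R)), IsThickSubcategory D →
    (DerivedCategory.singleFunctor (ModuleCat.{u} R) 0).obj (ModuleCat.of R R) ∈ D → X ∈ D

/-- The map `f` : it sends a wide subcategory `C` to the collection of small objects `X`
of the derived category such that `Hₙ X ∈ C` for all `n`. -/
def fSet {R : Type u} [Ring R] [HasDerivedCategory.{w} (ModuleCat.{u} R)]
    (C : Set (ModuleCat.{u} R)) : Set (DerivedCategory (ModuleCat.{u} R)) :=
  {X | IsSmallObject X ∧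
    ∀ n : ℤ, (DerivedCategory.homologyFunctor (ModuleCat.{u} R) n).obj X ∈ C}

/-- The map `g` : it sends a thick subcategory `D` to the wide subcategory generated by
the homology modules `Hₙ X` for `X ∈ D` and `n : ℤ`. -/
def gSet {R : Type u} [Ring R] [HasDerivedCategory.{w} (ModuleCat.{u} R)]
    (D : Set (DerivedCategory (ModuleCat.{u} R))) : Set (ModuleCat.{u} R) :=
  wideClosure {M | ∃ X ∈ D, ∃ n : ℤ,
    Nonempty ((DerivedCategory.homologyFunctor (ModuleCat.{u} R) n).obj X ≅ M)}

/-!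
A thick subcategory `D` of perfect complexes is determined by its support. For a perfect `X`
supported in the support of `D`, call an ideal `I` a *test ideal* if, for some finitely generated
`J ≤ I`, every `J`-power torsion object `Z` of the thick subcategory generated by `X` lies in `D`.
The unit ideal is one, and so is `I` when `a * b ∈ I` and both `I + (a)` and `I + (b)` are: the
cones of `a` and `b` on `Z` lie in `D`, so `a` and `b` are invertible on `Z` modulo `D` while
`a * b` is nilpotent. Hence, if `(0)` is not a test ideal, some maximal non-test ideal `p` exists
and is prime, and every `s ∉ p` is invertible modulo `D` on the objects which are power torsion for
a suitable finitely generated ideal contained in `p`. It remains to find `s ∉ p` which is nilpotent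
modulo `D` on such objects.

If `p` is outside the support of `D`, some `s ∉ p` kills `X`. Otherwise a complex `Y ∈ D` of finite
free modules is not exact after base change to the residue field at `p`. This gives `m` in `Yʲ` and
a linear form `φ` on `Yʲ` such that `d m`, `φ ∘ d` vanish modulo a finitely generated `J ≤ p` and
`s = φ m ∉ p`, so on every module `M` killed by `J`, multiplication by `s` factors through the
complex `Y ⊗ M`. Since `Y` is bounded, dimension shifting from the case of free `M` shows that
morphisms from perfect complexes to `Y ⊗ M` factor through `D`. Filtering by powers of `J` and by
truncations, a power of `s` on any `J`-power torsion object factors through `D`.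
-/

lemma exists_fg_le_sup_span_singleton {R : Type*} [CommRing R] {I J : Ideal R} {s : R} (hJ : J.FG)
    (h : J ≤ I ⊔ Ideal.span {s}) : ∃ J' ≤ I, J'.FG ∧ J ≤ J' ⊔ Ideal.span {s} := by
  induction J, hJ using Submodule.fg_induction with
  | singleton x =>
    obtain ⟨y, hy, z, hz, rfl⟩ := Submodule.mem_sup.1 (h (Submodule.mem_span_singleton_self x))
    refine ⟨Ideal.span {y}, (Ideal.span_singleton_le_iff_mem I).2 hy, ⟨{y}, by simp⟩,
      (Ideal.span_singleton_le_iff_mem _).2 ?_⟩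
    exact Submodule.add_mem_sup (Ideal.mem_span_singleton_self y) hz
  | sup J₁ J₂ _ _ ih₁ ih₂ =>
    obtain ⟨K₁, hK₁, hfg₁, hle₁⟩ := ih₁ (le_sup_left.trans h)
    obtain ⟨K₂, hK₂, hfg₂, hle₂⟩ := ih₂ (le_sup_right.trans h)
    exact ⟨K₁ ⊔ K₂, sup_le hK₁ hK₂, Submodule.FG.sup hfg₁ hfg₂, sup_le
      (hle₁.trans (sup_le_sup_right le_sup_left _)) (hle₂.trans (sup_le_sup_right le_sup_right _))⟩

section Linear

variable {A B : Type*} [Category A] [Preadditive A] [Category B] [Preadditive B]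
  {R : Type*} [CommRing R] [Linear R A] [Linear R B]

lemma mem_annihilator_end_iff {Z : A} {r : R} :
    r ∈ Module.annihilator R (Z ⟶ Z) ↔ r • 𝟙 Z = 0 := by
  refine ⟨fun h => Module.mem_annihilator.1 h _, fun h => Module.mem_annihilator.2 fun f => ?_⟩
  rw [← Category.id_comp f, ← Linear.smul_comp, h, zero_comp]

lemma annihilator_end_le_of_retract {X Y : A} (e : Retract X Y) :
    Module.annihilator R (Y ⟶ Y) ≤ Module.annihilator R (X ⟶ X) := fun r hr => by
  rw [mem_annihilator_end_iff] at hr ⊢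
  rw [← e.retract, ← Category.id_comp e.r, ← Linear.comp_smul, ← Linear.smul_comp, hr, zero_comp,
    comp_zero]

lemma annihilator_end_le_map (F : A ⥤ B) [F.Additive] [F.Linear R] (Z : A) :
    Module.annihilator R (Z ⟶ Z) ≤ Module.annihilator R (F.obj Z ⟶ F.obj Z) := fun r hr => by
  rw [mem_annihilator_end_iff] at hr ⊢
  rw [← F.map_id, ← F.map_smul, hr, F.map_zero]

lemma annihilator_end_map_le (F : A ⥤ B) [F.Additive] [F.Linear R] [F.Faithful] (Z : A) :
    Module.annihilator R (F.obj Z ⟶ F.obj Z) ≤ Module.annihilator R (Z ⟶ Z) := fun r hr => by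
  rw [mem_annihilator_end_iff] at hr ⊢
  exact F.map_injective (by rw [F.map_smul, F.map_id, hr, F.map_zero])

variable (A) in
/-- The objects on which every element of `I` acts nilpotently. -/
def IsPowerTorsion (I : Ideal R) : ObjectProperty A :=
  fun Z => ∀ r ∈ I, ∃ n : ℕ, r ^ n • 𝟙 Z = 0

lemma isPowerTorsion_iff_le_radical {I : Ideal R} {Z : A} :
    IsPowerTorsion A I Z ↔ I ≤ (Module.annihilator R (Z ⟶ Z)).radical :=
  forall₂_congr fun _ _ => exists_congr fun _ => mem_annihilator_end_iff.symm

lemma IsPowerTorsion.mono {I J : Ideal R} {Z : A} (h : IsPowerTorsion A J Z) (hIJ : I ≤ J) :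
    IsPowerTorsion A I Z :=
  fun r hr => h r (hIJ hr)

instance (I : Ideal R) : (IsPowerTorsion A I).IsStableUnderRetracts where
  of_retract e h := isPowerTorsion_iff_le_radical.2 ((isPowerTorsion_iff_le_radical.1 h).trans
    (Ideal.radical_mono (annihilator_end_le_of_retract e)))

/-- The ideals `I` such that an object satisfying `P` already satisfies `D` as soon as some fixed
finite set of elements of `I` acts nilpotently on it. -/
def IsTestIdeal (P D : ObjectProperty A) (I : Ideal R) : Prop :=
  ∃ J : Ideal R, J.FG ∧ J ≤ I ∧ P ⊓ IsPowerTorsion A J ≤ D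

variable {P D : ObjectProperty A}

lemma IsTestIdeal.mono {I I' : Ideal R} (h : IsTestIdeal P D I) (hI : I ≤ I') :
    IsTestIdeal P D I' :=
  let ⟨J, hJ, hJI, hD⟩ := h
  ⟨J, hJ, hJI.trans hI, hD⟩

lemma isTestIdeal_top [D.ContainsZero] [D.IsClosedUnderIsomorphisms] :
    IsTestIdeal P D (⊤ : Ideal R) := by
  refine ⟨⊤, ⟨{1}, by simp⟩, le_rfl, fun Z ⟨_, hZ⟩ => ?_⟩
  obtain ⟨n, hn⟩ := hZ 1 Submodule.mem_top
  rw [one_pow, one_smul] at hn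
  exact D.prop_of_isZero ((IsZero.iff_id_eq_zero Z).2 hn)

lemma IsTestIdeal.exists_mem_of_isChain {c : Set (Ideal R)} (hc : IsChain (· ≤ ·) c)
    (hne : c.Nonempty) (h : IsTestIdeal P D (sSup c)) : ∃ I ∈ c, IsTestIdeal P D I := by
  obtain ⟨J, hJ, hle, hD⟩ := h
  obtain ⟨I, hI, hJI⟩ := (CompleteLattice.isCompactElement_iff_le_of_directed_sSup_le _ J).1
    ((Submodule.fg_iff_compact J).1 hJ) c hne hc.directedOn hle
  exact ⟨I, hI, J, hJ, hJI, hD⟩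

end Linear

section Triangulated

variable {T : Type*} [Category T] [HasZeroObject T] [Preadditive T] [HasShift T ℤ]
  [∀ n : ℤ, (shiftFunctor T n).Additive] [Pretriangulated T]

section Thick

variable {D : Set T}

lemma IsThickSubcategory.isStableUnderRetracts (hD : IsThickSubcategory D) :
    ObjectProperty.IsStableUnderRetracts (· ∈ D) where
  of_retract e h := hD.retract_mem _ _ e.i e.r e.retract h

lemma IsThickSubcategory.isTriangulated (hD : IsThickSubcategory D) :
    ObjectProperty.IsTriangulated (· ∈ D) where
  exists_zero := ⟨0, isZero_zero T, hD.zero_mem⟩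
  isStableUnderShiftBy n := ⟨fun X hX => hD.shift_mem X n hX⟩
  ext₂' S hS h₁ h₃ := ObjectProperty.le_isoClosure _ _ (hD.ext₂ S hS h₁ h₃)

lemma isThickSubcategory_setOf (P : ObjectProperty T) [P.IsTriangulated]
    [P.IsStableUnderRetracts] : IsThickSubcategory {X | P X} where
  mem_of_iso := P.prop_of_iso
  zero_mem := P.prop_zero
  shift_mem X n := P.le_shift n X
  ext₂ := P.ext_of_isTriangulatedClosed₂
  retract_mem _ _ i r h := P.prop_of_retract ⟨i, r, h⟩

end Thick

variable {R : Type*} [CommRing R] [Linear R T]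

section Factorization

variable (R) (P : ObjectProperty T) [P.IsTriangulated] [P.IsClosedUnderIsomorphisms]

/-- The morphisms which factor through an object satisfying `P`; equivalently, those which vanish
in the Verdier quotient by `P`. -/
def factorSubmodule (X Y : T) : Submodule R (X ⟶ Y) where
  carrier := {φ | ∃ (d : T) (a : X ⟶ d) (b : d ⟶ Y), P d ∧ a ≫ b = φ}
  zero_mem' := ⟨0, 0, 0, P.prop_zero, comp_zero⟩
  add_mem' := by
    rintro _ _ ⟨d, a, b, hd, rfl⟩ ⟨d', a', b', hd', rfl⟩
    exact ⟨d ⊞ d', biprod.lift a a', biprod.desc b b',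
      P.ext_of_isTriangulatedClosed₂ _ (binaryBiproductTriangle_distinguished d d') hd hd',
      biprod.lift_desc⟩
  smul_mem' := by
    rintro r _ ⟨d, a, b, hd, rfl⟩
    exact ⟨d, a, r • b, hd, Linear.comp_smul _ _ _ a r b⟩

variable {R P} {W X Y Z : T} {φ : X ⟶ Y}

lemma mem_factorSubmodule_of_prop {d : T} (hd : P d) (a : X ⟶ d) (b : d ⟶ Y) :
    a ≫ b ∈ factorSubmodule R P X Y :=
  ⟨d, a, b, hd, rfl⟩

lemma comp_mem_factorSubmodule (ψ : W ⟶ X) (h : φ ∈ factorSubmodule R P X Y) :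
    ψ ≫ φ ∈ factorSubmodule R P W Y := by
  obtain ⟨d, a, b, hd, rfl⟩ := h
  exact ⟨d, ψ ≫ a, b, hd, Category.assoc _ _ _⟩

lemma mem_factorSubmodule_comp (h : φ ∈ factorSubmodule R P X Y) (ψ : Y ⟶ Z) :
    φ ≫ ψ ∈ factorSubmodule R P X Z := by
  obtain ⟨d, a, b, hd, rfl⟩ := h
  exact ⟨d, a, b ≫ ψ, hd, (Category.assoc _ _ _).symm⟩

lemma map_shift_mem_factorSubmodule (h : φ ∈ factorSubmodule R P X Y) (n : ℤ) :
    φ⟦n⟧' ∈ factorSubmodule R P (X⟦n⟧) (Y⟦n⟧) := by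
  obtain ⟨d, a, b, hd, rfl⟩ := h
  exact ⟨d⟦n⟧, a⟦n⟧', b⟦n⟧', P.le_shift n _ hd, ((shiftFunctor T n).map_comp a b).symm⟩

lemma mem_factorSubmodule_iff_exists_trW_comp_eq_zero :
    φ ∈ factorSubmodule R P X Y ↔ ∃ (X' : T) (s : X' ⟶ X), P.trW s ∧ s ≫ φ = 0 := by
  constructor
  · rintro ⟨d, a, b, hd, rfl⟩
    obtain ⟨X', s, δ, hT⟩ := distinguished_cocone_triangle₁ a
    have hsa : s ≫ a = 0 := comp_distTriang_mor_zero₁₂ _ hT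
    exact ⟨X', s, ObjectProperty.trW.mk P hT hd, by rw [← Category.assoc, hsa, zero_comp]⟩
  · rintro ⟨X', s, ⟨C, g, h, hT, hC⟩, hs⟩
    obtain ⟨b, rfl⟩ := Triangle.yoneda_exact₂ _ hT φ hs
    exact mem_factorSubmodule_of_prop hC g b

variable [IsTriangulated T]

lemma mem_factorSubmodule_of_trW_comp {s : W ⟶ X} (hs : P.trW s)
    (h : s ≫ φ ∈ factorSubmodule R P W Y) : φ ∈ factorSubmodule R P X Y := by
  obtain ⟨X', t, ht, hts⟩ := mem_factorSubmodule_iff_exists_trW_comp_eq_zero.1 h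
  exact mem_factorSubmodule_iff_exists_trW_comp_eq_zero.2
    ⟨X', t ≫ s, P.trW.comp_mem _ _ ht hs, by rw [Category.assoc, hts]⟩

lemma prop_of_trW_of_mem_factorSubmodule [P.IsStableUnderRetracts] {t : X ⟶ X} (ht : P.trW t)
    (h : t ∈ factorSubmodule R P X X) : P X := by
  obtain ⟨d, a, b, hd, hab⟩ :=
    mem_factorSubmodule_of_trW_comp (φ := 𝟙 X) ht ((Category.comp_id t).symm ▸ h)
  exact P.prop_of_retract ⟨a, b, hab⟩ hd

end Factorization

section Negligible

/-- `A` is negligible for `r` if `r` kills, in the Verdier quotient by `D`, all morphisms from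
objects satisfying `P` to `A`. -/
def IsNegligible (P D : ObjectProperty T) [D.IsTriangulated] [D.IsClosedUnderIsomorphisms]
    (r : R) (A : T) : Prop :=
  ∀ ⦃W : T⦄, P W → ∀ φ : W ⟶ A, r • φ ∈ factorSubmodule R D W A

variable {P D : ObjectProperty T} [D.IsTriangulated] [D.IsClosedUnderIsomorphisms] {a b : R}

lemma IsNegligible.of_iso {A B : T} (h : IsNegligible P D a A) (e : A ≅ B) :
    IsNegligible P D a B := fun W hW φ => by
  simpa using mem_factorSubmodule_comp (h hW (φ ≫ e.inv)) e.hom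

lemma IsNegligible.of_isZero {A : T} (hA : IsZero A) (r : R) : IsNegligible P D r A :=
  fun W _ φ => by
    rw [hA.eq_of_tgt (r • φ) 0]
    exact zero_mem _

lemma IsNegligible.shift [∀ n : ℤ, (shiftFunctor T n).Linear R] [P.IsStableUnderShift ℤ] {A : T}
    (h : IsNegligible P D a A) (n : ℤ) : IsNegligible P D a (A⟦n⟧) := fun W hW φ => by
  obtain ⟨ψ, hψ⟩ := (shiftFunctor T n).map_surjective ((shiftNegShift W n).hom ≫ φ)
  have hψ_mem := comp_mem_factorSubmodule (shiftNegShift W n).inv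
    (map_shift_mem_factorSubmodule (h (P.le_shift (-n) _ hW) ψ) n)
  rwa [Functor.map_smul, Linear.comp_smul, hψ, Iso.inv_hom_id_assoc] at hψ_mem

lemma IsNegligible.retractClosure {A : T} (h : IsNegligible P D a A) :
    IsNegligible P.retractClosure D a A := by
  rintro W ⟨W', hW', ⟨e⟩⟩ φ
  have h_mem := comp_mem_factorSubmodule e.i (h hW' (e.r ≫ φ))
  rwa [Linear.comp_smul, e.retract_assoc] at h_mem

variable [IsTriangulated T] [P.IsTriangulated] [P.IsClosedUnderIsomorphisms]

lemma IsNegligible.mul_smul_mem_factorSubmodule (hDP : D ≤ P) {S : Triangle T}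
    (hS : S ∈ distTriang T) (ha : IsNegligible P D a S.obj₁) {W : T} (hW : P W) {φ : W ⟶ S.obj₂}
    (hφ : b • (φ ≫ S.mor₂) ∈ factorSubmodule R D W S.obj₃) :
    (a * b) • φ ∈ factorSubmodule R D W S.obj₂ := by
  obtain ⟨W', u, ⟨d, g, h, hT, hd⟩, hu⟩ := mem_factorSubmodule_iff_exists_trW_comp_eq_zero.1 hφ
  have hW' : P W' := P.ext_of_isTriangulatedClosed₁ _ hT hW (hDP _ hd)
  obtain ⟨ψ, hψ⟩ := Triangle.coyoneda_exact₂ _ hS (u ≫ (b • φ)) (by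
    rw [Category.assoc, Linear.smul_comp, hu])
  refine mem_factorSubmodule_of_trW_comp (ObjectProperty.trW.mk D hT hd) ?_
  have hψ_mem := mem_factorSubmodule_comp (ha hW' ψ) S.mor₁
  rwa [Linear.smul_comp, ← hψ, ← Linear.comp_smul, ← mul_smul] at hψ_mem

lemma IsNegligible.ext₂ (hDP : D ≤ P) {S : Triangle T} (hS : S ∈ distTriang T)
    (ha : IsNegligible P D a S.obj₁) (hb : IsNegligible P D b S.obj₃) :
    IsNegligible P D (a * b) S.obj₂ :=
  fun _ hW φ => ha.mul_smul_mem_factorSubmodule hDP hS hW (hb hW (φ ≫ S.mor₂))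

end Negligible

section PowerTorsion

lemma mul_mem_annihilator_end {S : Triangle T} (hS : S ∈ distTriang T) {a b : R}
    (ha : a ∈ Module.annihilator R (S.obj₁ ⟶ S.obj₁))
    (hb : b ∈ Module.annihilator R (S.obj₃ ⟶ S.obj₃)) :
    a * b ∈ Module.annihilator R (S.obj₂ ⟶ S.obj₂) := by
  rw [mem_annihilator_end_iff] at ha hb ⊢
  obtain ⟨ψ, hψ⟩ := Triangle.coyoneda_exact₂ _ hS (b • 𝟙 S.obj₂) (by
    rw [Linear.smul_comp, Category.id_comp, ← Category.comp_id S.mor₂, ← Linear.comp_smul, hb,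
      comp_zero])
  rw [mul_smul, hψ, ← Linear.comp_smul, ← Category.id_comp S.mor₁, ← Linear.smul_comp, ha,
    zero_comp, comp_zero]

variable [∀ n : ℤ, (shiftFunctor T n).Linear R]

instance (I : Ideal R) : (IsPowerTorsion T I).IsTriangulated where
  exists_zero := ⟨0, isZero_zero T, fun _ _ => ⟨0, (isZero_zero T).eq_of_src _ _⟩⟩
  isStableUnderShiftBy n := ⟨fun Z h => isPowerTorsion_iff_le_radical.2
    ((isPowerTorsion_iff_le_radical.1 h).trans
      (Ideal.radical_mono (annihilator_end_le_map (shiftFunctor T n) Z)))⟩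
  ext₂' S hS h₁ h₃ := ObjectProperty.le_isoClosure _ _ fun r hr => by
    obtain ⟨m, hm⟩ := h₁ r hr
    obtain ⟨n, hn⟩ := h₃ r hr
    rw [← mem_annihilator_end_iff] at hm hn
    exact ⟨m + n, mem_annihilator_end_iff.1 (pow_add r m n ▸ mul_mem_annihilator_end hS hm hn)⟩

lemma exists_pow_smul_id_eq_zero_of_triangEnvelope {X Z : T} {s : R}
    (hs : s • 𝟙 X = 0) (hZ : (ObjectProperty.singleton X).triangEnvelope Z) :
    ∃ n : ℕ, s ^ n • 𝟙 Z = 0 := by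
  have hX : IsPowerTorsion T (Ideal.span {s}) X := by
    rw [isPowerTorsion_iff_le_radical, Ideal.span_singleton_le_iff_mem]
    exact Ideal.le_radical (mem_annihilator_end_iff.2 hs)
  exact (ObjectProperty.triangEnvelope_le_iff _).2 (ObjectProperty.singleton_le_iff.2 hX) Z hZ s
    (Ideal.mem_span_singleton_self s)

lemma sq_mem_annihilator_end_cone {Z C : T} {r : R} {g : Z ⟶ C} {h : C ⟶ Z⟦(1 : ℤ)⟧}
    (hT : Triangle.mk (r • 𝟙 Z) g h ∈ distTriang T) :
    r ^ 2 ∈ Module.annihilator R (C ⟶ C) := by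
  have hrg : (r • 𝟙 Z) ≫ g = 0 := comp_distTriang_mor_zero₁₂ _ hT
  have hhr : h ≫ (r • 𝟙 Z)⟦(1 : ℤ)⟧' = 0 := comp_distTriang_mor_zero₃₁ _ hT
  obtain ⟨k, hk⟩ : ∃ k : Z⟦(1 : ℤ)⟧ ⟶ C, r • 𝟙 C = h ≫ k :=
    Triangle.yoneda_exact₃ _ hT (r • 𝟙 C) (show g ≫ (r • 𝟙 C) = 0 by simpa using hrg)
  replace hhr : r • h = 0 := by simpa using hhr
  rw [mem_annihilator_end_iff, sq, mul_smul, hk, ← Linear.smul_comp, hhr, zero_comp]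

end PowerTorsion

section LocalGlobal

variable [IsTriangulated T] (D : ObjectProperty T) [D.IsTriangulated]
  [D.IsClosedUnderIsomorphisms]

variable (R) in
/-- The scalars which act invertibly on `Z` in the Verdier quotient by `D`. -/
def invertibleScalars (Z : T) : Submonoid R where
  carrier := {r | D.trW (r • 𝟙 Z)}
  one_mem' := by
    simpa only [Set.mem_ofPred_eq, one_smul] using D.trW.id_mem Z
  mul_mem' {a b} ha hb := by
    have hab : (a * b) • 𝟙 Z = (a • 𝟙 Z) ≫ (b • 𝟙 Z) := by simp [mul_smul, smul_comm a b]
    rw [Set.mem_ofPred_eq, hab]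
    exact D.trW.comp_mem _ _ ha hb

variable {D} in
lemma prop_of_mem_invertibleScalars [D.IsStableUnderRetracts] {Z : T} {s : R}
    (hs : s ∈ invertibleScalars R D Z) {n : ℕ} (h : s ^ n • 𝟙 Z ∈ factorSubmodule R D Z Z) : D Z :=
  prop_of_trW_of_mem_factorSubmodule (pow_mem hs n) h

end LocalGlobal

section TestIdeal

variable {P D : ObjectProperty T} [∀ n : ℤ, (shiftFunctor T n).Linear R] [IsTriangulated T]
  [P.IsTriangulated] [P.IsClosedUnderIsomorphisms] [D.IsTriangulated]

lemma IsTestIdeal.exists_mem_invertibleScalars {I : Ideal R} {s : R}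
    (h : IsTestIdeal P D (I ⊔ Ideal.span {s})) :
    ∃ J : Ideal R, J.FG ∧ J ≤ I ∧
      ∀ Z, P Z → IsPowerTorsion T J Z → s ∈ invertibleScalars R D Z := by
  obtain ⟨J, hJ, hle, hD⟩ := h
  obtain ⟨J', hJ'I, hJ', hJJ'⟩ := exists_fg_le_sup_span_singleton hJ hle
  refine ⟨J', hJ', hJ'I, fun Z hPZ hZ => ?_⟩
  obtain ⟨C, g, h, hT⟩ := distinguished_cocone_triangle (s • 𝟙 Z)
  have hPC : P C := P.ext_of_isTriangulatedClosed₃ _ hT hPZ hPZ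
  have hJ'C : IsPowerTorsion T J' C :=
    (IsPowerTorsion T J').ext_of_isTriangulatedClosed₃ _ hT hZ hZ
  have hsC : s ∈ (Module.annihilator R (C ⟶ C)).radical := ⟨2, sq_mem_annihilator_end_cone hT⟩
  have hJC : IsPowerTorsion T J C := isPowerTorsion_iff_le_radical.2 (hJJ'.trans
    (sup_le (isPowerTorsion_iff_le_radical.1 hJ'C) ((Ideal.span_singleton_le_iff_mem _).2 hsC)))
  have hDC : D C := hD C ⟨hPC, hJC⟩
  exact ObjectProperty.trW.mk D hT hDC

variable [D.IsStableUnderRetracts]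

lemma IsTestIdeal.of_mul_mem {I : Ideal R} {a b : R} (ha : IsTestIdeal P D (I ⊔ Ideal.span {a}))
    (hb : IsTestIdeal P D (I ⊔ Ideal.span {b})) (hab : a * b ∈ I) : IsTestIdeal P D I := by
  obtain ⟨J₁, hJ₁, hle₁, h₁⟩ := ha.exists_mem_invertibleScalars
  obtain ⟨J₂, hJ₂, hle₂, h₂⟩ := hb.exists_mem_invertibleScalars
  refine ⟨J₁ ⊔ J₂ ⊔ Ideal.span {a * b},
    Submodule.FG.sup (Submodule.FG.sup hJ₁ hJ₂) ⟨{a * b}, by simp⟩,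
    sup_le (sup_le hle₁ hle₂) ((Ideal.span_singleton_le_iff_mem I).2 hab), fun Z ⟨hPZ, hZ⟩ => ?_⟩
  obtain ⟨n, hn⟩ := hZ _ (Ideal.mem_sup_right (Ideal.mem_span_singleton_self (a * b)))
  have ha_inv := h₁ Z hPZ (hZ.mono (le_sup_left.trans le_sup_left))
  have hb_inv := h₂ Z hPZ (hZ.mono (le_sup_right.trans le_sup_left))
  refine prop_of_mem_invertibleScalars (mul_mem ha_inv hb_inv) (n := n) ?_
  rw [hn]
  exact zero_mem _

lemma exists_isPrime_not_isTestIdeal (h : ¬ IsTestIdeal P D (⊥ : Ideal R)) :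
    ∃ p : Ideal R, p.IsPrime ∧ ¬ IsTestIdeal P D p ∧
      ∀ s ∉ p, IsTestIdeal P D (p ⊔ Ideal.span {s}) := by
  obtain ⟨p, -, hp⟩ := zorn_le_nonempty₀ {I : Ideal R | ¬ IsTestIdeal P D I}
    (fun c hc hchain I hI => ⟨sSup c, fun hsup =>
      let ⟨I', hI', htest⟩ := hsup.exists_mem_of_isChain hchain ⟨I, hI⟩
      hc hI' htest, fun _ => le_sSup⟩) ⊥ h
  have hsup (s : R) (hs : s ∉ p) : IsTestIdeal P D (p ⊔ Ideal.span {s}) := by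
    by_contra hnot
    exact hs (hp.le_of_ge hnot le_sup_left
      (Ideal.mem_sup_right (Ideal.mem_span_singleton_self s)))
  refine ⟨p, ⟨fun htop => hp.prop (htop ▸ isTestIdeal_top), fun {a b} hab => ?_⟩, hp.prop, hsup⟩
  by_contra! hnot
  exact hp.prop ((hsup a hnot.1).of_mul_mem (hsup b hnot.2) hab)

lemma le_of_forall_primeSpectrum (H : ∀ p : PrimeSpectrum R, ∃ s ∉ p.asIdeal, ∃ J : Ideal R,
      J.FG ∧ J ≤ p.asIdeal ∧ ∀ Z, P Z → IsPowerTorsion T J Z →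
        ∃ n : ℕ, s ^ n • 𝟙 Z ∈ factorSubmodule R D Z Z) :
    P ≤ D := by
  have hbot : IsTestIdeal P D (⊥ : Ideal R) := by
    by_contra hnot
    obtain ⟨p, hprime, hp, hsup⟩ := exists_isPrime_not_isTestIdeal hnot
    obtain ⟨s, hs, J, hJ, hJp, hfac⟩ := H ⟨p, hprime⟩
    obtain ⟨J', hJ', hJ'p, hinv⟩ := (hsup s hs).exists_mem_invertibleScalars
    refine hp ⟨J ⊔ J', Submodule.FG.sup hJ hJ', sup_le hJp hJ'p, fun Z ⟨hPZ, hZ⟩ => ?_⟩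
    obtain ⟨n, hn⟩ := hfac Z hPZ (hZ.mono le_sup_left)
    exact prop_of_mem_invertibleScalars (hinv Z hPZ (hZ.mono le_sup_right)) hn
  obtain ⟨J, -, hJ, hD⟩ := hbot
  exact fun Z hZ => hD Z ⟨hZ, fun r hr => ⟨1, by
    rw [pow_one, (Submodule.mem_bot R).1 (hJ hr), zero_smul]⟩⟩

end TestIdeal

end Triangulated

section Retracts

variable {T : Type*} [Category T] [HasZeroObject T] [Preadditive T] [HasShift T ℤ]
  [∀ n : ℤ, (shiftFunctor T n).Additive] [Pretriangulated T]

instance (P : ObjectProperty T) [P.IsTriangulated] [P.IsClosedUnderIsomorphisms] :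
    P.retractClosure.IsTriangulated where
  toIsTriangulatedClosed₂ := .mk' fun _ hS h₁ h₃ =>
    ObjectProperty.monotone_retractClosure
      (ObjectProperty.extensionProduct_le_of_isTriangulatedClosed₂ le_rfl le_rfl) _
      (P.extensionProduct_retractClosure_retractClosure_le P _ ⟨_, _, _, _, _, hS, h₁, h₃⟩)

lemma exists_iso_biprod_of_retract {X Y : T} (e : Retract X Y) :
    ∃ X' : T, Nonempty (Y ≅ X ⊞ X') := by
  obtain ⟨X', c, δ, hT⟩ := distinguished_cocone_triangle e.i
  have : Mono e.i := inferInstance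
  have hδ : δ = 0 := (Triangle.mor₃_eq_zero_iff_mono₁ _ hT).2 this
  obtain ⟨f, -⟩ := exists_iso_binaryBiproduct_of_distTriang _ hT hδ
  exact ⟨X', ⟨f⟩⟩

lemma prop_cone_snd_inr [IsTriangulated T] {D : ObjectProperty T} [D.IsTriangulated]
    [D.IsClosedUnderIsomorphisms] {Y Y' Q : T} (hY : D Y) {g : Y ⊞ Y' ⟶ Q}
    {h : Q ⟶ (Y ⊞ Y')⟦(1 : ℤ)⟧}
    (hQ : Triangle.mk (biprod.snd ≫ biprod.inr) g h ∈ distTriang T) :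
    D Q ∧ Nonempty (Retract Y Q) := by
  -- In fact `Q ≅ Y ⊞ Y⟦1⟧`.
  constructor
  · have hsnd : D.trW (biprod.snd : Y ⊞ Y' ⟶ Y') :=
      (D.trW_iff_of_distinguished' _ (binaryBiproductTriangle_distinguished Y Y')).2 hY
    have hinl : D.trW (biprod.inl : Y' ⟶ Y' ⊞ Y) :=
      (D.trW_iff_of_distinguished _ (binaryBiproductTriangle_distinguished Y' Y)).2 hY
    have hinr : D.trW (biprod.inr : Y' ⟶ Y ⊞ Y') := by
      have h_braid : biprod.inl ≫ (biprod.braiding Y' Y).hom = biprod.inr := by ext <;> simp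
      exact h_braid ▸ D.trW.comp_mem _ _ hinl (D.trW.of_isIso _)
    exact (D.trW_iff_of_distinguished _ hQ).1 (D.trW.comp_mem _ _ hsnd hinr)
  · have h_fst : (biprod.snd ≫ biprod.inr : Y ⊞ Y' ⟶ Y ⊞ Y') ≫ biprod.fst = 0 := by simp
    obtain ⟨b, hb⟩ : ∃ b : Q ⟶ Y, biprod.fst = g ≫ b :=
      Triangle.yoneda_exact₂ _ hQ biprod.fst h_fst
    exact ⟨⟨biprod.inl ≫ g, b, by rw [Category.assoc, ← hb, biprod.inl_fst]⟩⟩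

end Retracts

section FiniteFree

/-- A bounded complex of finite free modules. -/
structure IsFiniteFree {R : Type u} [Ring R] (P : CochainComplex (ModuleCat.{u} R) ℤ) : Prop where
  exists_bounds : ∃ a b : ℤ, ∀ i, i < a ∨ b < i → IsZero (P.X i)
  free : ∀ i, Module.Free R (P.X i)
  finite : ∀ i, Module.Finite R (P.X i)

namespace IsFiniteFree

variable {R : Type u} [Ring R] {P K : CochainComplex (ModuleCat.{u} R) ℤ}

lemma isKProjective (hP : IsFiniteFree P) : P.IsKProjective := by
  obtain ⟨a, b, hab⟩ := hP.exists_bounds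
  have : P.IsStrictlyLE b :=
    (CochainComplex.isStrictlyLE_iff _ _).2 fun i hi => hab i (Or.inr hi)
  have := hP.free
  exact CochainComplex.isKProjective_of_projective P b

lemma of_isZero (hP : IsZero P) : IsFiniteFree P := by
  have h (i : ℤ) : IsZero (P.X i) := (HomologicalComplex.eval _ _ i).map_isZero hP
  have (i : ℤ) : Subsingleton (P.X i) := ModuleCat.subsingleton_of_isZero (h i)
  exact ⟨⟨0, 0, fun i _ => h i⟩, fun _ => inferInstance, fun _ => inferInstance⟩

lemma single (M : ModuleCat.{u} R) [Module.Free R M] [Module.Finite R M] (n : ℤ) :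
    IsFiniteFree ((HomologicalComplex.single _ (ComplexShape.up ℤ) n).obj M) := by
  have h_zero (i : ℤ) (hi : i ≠ n) :
      IsZero (((HomologicalComplex.single _ (ComplexShape.up ℤ) n).obj M).X i) :=
    HomologicalComplex.isZero_single_obj_X _ _ _ _ hi
  have h (i : ℤ) :
      Module.Free R (((HomologicalComplex.single _ (ComplexShape.up ℤ) n).obj M).X i) ∧
        Module.Finite R (((HomologicalComplex.single _ (ComplexShape.up ℤ) n).obj M).X i) := by
    by_cases hi : i = n
    · subst hi
      let e := (HomologicalComplex.singleObjXSelf (ComplexShape.up ℤ) i M).symm.toLinearEquiv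
      exact ⟨Module.Free.of_equiv e, Module.Finite.equiv e⟩
    · have := ModuleCat.subsingleton_of_isZero (h_zero i hi)
      exact ⟨inferInstance, inferInstance⟩
  exact ⟨⟨n, n, fun i hi => h_zero i (by lia)⟩, fun i => (h i).1, fun i => (h i).2⟩

lemma shift (hP : IsFiniteFree P) (n : ℤ) : IsFiniteFree (P⟦n⟧) := by
  obtain ⟨a, b, hab⟩ := hP.exists_bounds
  exact ⟨⟨a - n, b - n, fun i hi => hab (i + n) (by lia)⟩, fun _ => hP.free _,
    fun _ => hP.finite _⟩

lemma mappingCone (hP : IsFiniteFree P) (hK : IsFiniteFree K) (φ : P ⟶ K) :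
    IsFiniteFree (CochainComplex.mappingCone φ) := by
  obtain ⟨a, b, hab⟩ := hP.exists_bounds
  obtain ⟨a', b', hab'⟩ := hK.exists_bounds
  have e (i : ℤ) : (CochainComplex.mappingCone φ).X i ≃ₗ[R] P.X (i + 1) × K.X i :=
    (HomologicalComplex.homotopyCofiber.XIsoBiprod φ i (i + 1) rfl ≪≫
      ModuleCat.biprodIsoProd _ _).toLinearEquiv
  have := hP.free
  have := hP.finite
  have := hK.free
  have := hK.finite
  refine ⟨⟨min (a - 1) a', max b b', fun i hi => ?_⟩, fun i => Module.Free.of_equiv (e i).symm,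
    fun i => Module.Finite.equiv (e i).symm⟩
  rw [CochainComplex.mappingCone.isZero_X_iff]
  exact ⟨hab _ (by lia), hab' _ (by lia)⟩

end IsFiniteFree

lemma exists_map_Q_eq_of_isKProjective {C : Type*} [Category C] [Abelian C] [HasDerivedCategory C]
    {P : CochainComplex C ℤ} (K : CochainComplex C ℤ) [P.IsKProjective]
    (f : DerivedCategory.Q.obj P ⟶ DerivedCategory.Q.obj K) :
    ∃ φ : P ⟶ K, DerivedCategory.Q.map φ = f := by
  obtain ⟨g, hg⟩ := (CochainComplex.IsKProjective.Qh_map_bijective P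
    ((HomotopyCategory.quotient _ _).obj K)).surjective
    ((DerivedCategory.quotientCompQhIso _).hom.app P ≫ f ≫
      (DerivedCategory.quotientCompQhIso _).inv.app K)
  obtain ⟨φ, rfl⟩ := (HomotopyCategory.quotient _ _).map_surjective g
  refine ⟨φ, ?_⟩
  rw [← cancel_epi ((DerivedCategory.quotientCompQhIso _).hom.app P),
    ← DerivedCategory.quotientCompQhIso_hom_naturality, hg]
  simp

variable (R : Type u) [Ring R] [HasDerivedCategory.{w} (ModuleCat.{u} R)]

/-- The objects of the derived category represented by bounded complexes of finite free modules. -/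
def finiteFree : ObjectProperty (DerivedCategory (ModuleCat.{u} R)) :=
  fun X => ∃ P : CochainComplex (ModuleCat.{u} R) ℤ,
    IsFiniteFree P ∧ Nonempty (DerivedCategory.Q.obj P ≅ X)

instance : (finiteFree R).IsClosedUnderIsomorphisms where
  of_iso := fun e ⟨P, hP, ⟨eP⟩⟩ => ⟨P, hP, ⟨eP ≪≫ e⟩⟩

instance : (finiteFree R).IsTriangulatedClosed₃ := .mk' <| by
  rintro S hS ⟨P, hP, ⟨eP⟩⟩ ⟨K, hK, ⟨eK⟩⟩
  have := hP.isKProjective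
  obtain ⟨φ, hφ⟩ := exists_map_Q_eq_of_isKProjective K (eP.hom ≫ S.mor₁ ≫ eK.inv)
  have h_comm : DerivedCategory.Q.map φ ≫ eK.hom = eP.hom ≫ S.mor₁ := by simp [hφ]
  exact ⟨_, hP.mappingCone hK φ, ⟨Triangle.π₃.mapIso (isoTriangleOfIso₁₂ _ _
    (DerivedCategory.mappingCone_triangle_distinguished φ) hS eP eK h_comm)⟩⟩

instance : (finiteFree R).IsStableUnderShift ℤ where
  isStableUnderShiftBy n := ⟨fun _ ⟨P, hP, ⟨eP⟩⟩ => ⟨P⟦n⟧, hP.shift n,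
    ⟨(DerivedCategory.Q.commShiftIso n).app P ≪≫ (shiftFunctor _ n).mapIso eP⟩⟩⟩

instance : (finiteFree R).IsTriangulated where
  exists_zero := ⟨_, DerivedCategory.Q.map_isZero (isZero_zero _), 0, .of_isZero (isZero_zero _),
    ⟨Iso.refl _⟩⟩
  toIsTriangulatedClosed₂ := .of_isTriangulatedClosed₃

/-- The perfect objects of the derived category: the retracts of bounded complexes of finite free
modules. -/
abbrev perfect : ObjectProperty (DerivedCategory (ModuleCat.{u} R)) :=
  (finiteFree R).retractClosure

variable {R}

lemma perfect_of_isSmallObject {X : DerivedCategory (ModuleCat.{u} R)} (hX : IsSmallObject X) :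
    perfect R X :=
  hX _ (isThickSubcategory_setOf (perfect R))
    ((finiteFree R).le_retractClosure _ ⟨_, .single (ModuleCat.of R R) 0, ⟨Iso.refl _⟩⟩)

lemma exists_retract_isFiniteFree
    {D : ObjectProperty (DerivedCategory (ModuleCat.{u} R))} [D.IsTriangulated]
    [D.IsClosedUnderIsomorphisms] {Y : DerivedCategory (ModuleCat.{u} R)} (hY : D Y)
    (hY_perfect : perfect R Y) :
    ∃ P : CochainComplex (ModuleCat.{u} R) ℤ, IsFiniteFree P ∧ D (DerivedCategory.Q.obj P) ∧
      Nonempty (Retract Y (DerivedCategory.Q.obj P)) := by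
  obtain ⟨P, hP, ⟨e⟩⟩ := hY_perfect
  obtain ⟨Y', ⟨f⟩⟩ := exists_iso_biprod_of_retract e
  obtain ⟨Q, g, h, hQ⟩ :=
    distinguished_cocone_triangle (biprod.snd ≫ biprod.inr : Y ⊞ Y' ⟶ Y ⊞ Y')
  obtain ⟨hDQ, ⟨e'⟩⟩ := prop_cone_snd_inr hY hQ
  have hP' : finiteFree R (Y ⊞ Y') := (finiteFree R).prop_of_iso f hP
  obtain ⟨K, hK, ⟨eK⟩⟩ : finiteFree R Q := (finiteFree R).ext_of_isTriangulatedClosed₃ _ hQ hP' hP'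
  exact ⟨K, hK, D.prop_of_iso eK.symm hDQ, ⟨e'.trans (Retract.ofIso eK.symm)⟩⟩

end FiniteFree

section ResidueField

open TensorProduct

variable {R : Type*} [CommRing R] (p : Ideal R) [p.IsPrime] {L M N Q : Type*}
  [AddCommGroup L] [Module R L] [AddCommGroup M] [Module R M] [AddCommGroup N] [Module R N]
  [AddCommGroup Q] [Module R Q]

lemma exists_algebraMap_residueField_eq_smul {ι : Type*} [Finite ι] (x : ι → p.ResidueField) :
    ∃ s ∉ p, ∃ y : ι → R, ∀ i, algebraMap R p.ResidueField (y i) = s • x i := by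
  obtain ⟨b, hb⟩ := IsLocalization.exist_integer_multiples_of_finite (nonZeroDivisors (R ⧸ p)) x
  choose z hz using hb
  obtain ⟨s, hs⟩ := Ideal.Quotient.mk_surjective (b : R ⧸ p)
  choose y hy using fun i => Ideal.Quotient.mk_surjective (z i)
  refine ⟨s, fun hsp => nonZeroDivisors.ne_zero b.2 ?_, y, fun i => ?_⟩
  · rw [← hs, Ideal.Quotient.eq_zero_iff_mem.2 hsp]
  · rw [IsScalarTower.algebraMap_apply R (R ⧸ p), Ideal.Quotient.algebraMap_eq, hy, hz, ← hs,
      ← Ideal.Quotient.algebraMap_eq, algebraMap_smul]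

lemma exists_one_tmul_eq_smul (x : p.ResidueField ⊗[R] Q) :
    ∃ s ∉ p, ∃ q : Q, (1 : p.ResidueField) ⊗ₜ[R] q = s • x := by
  induction x with
  | zero => exact ⟨1, p.one_notMem, 0, by simp⟩
  | tmul k q =>
    obtain ⟨s, hs, y, hy⟩ := exists_algebraMap_residueField_eq_smul p fun _ : Unit => k
    exact ⟨s, hs, y () • q, by
      rw [← smul_tmul, Algebra.smul_def, mul_one, hy, smul_tmul']⟩
  | add x₁ x₂ h₁ h₂ =>
    obtain ⟨s₁, hs₁, q₁, hq₁⟩ := h₁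
    obtain ⟨s₂, hs₂, q₂, hq₂⟩ := h₂
    exact ⟨s₁ * s₂, p.primeCompl.mul_mem hs₁ hs₂, s₂ • q₁ + s₁ • q₂, by
      rw [tmul_add, tmul_smul, tmul_smul, hq₁, hq₂, ← mul_smul, ← mul_smul, mul_comm s₂, smul_add]⟩

lemma exists_algebraMap_residueField_comp_eq_smul [Module.Free R M] [Module.Finite R M]
    (f : M →ₗ[R] p.ResidueField) :
    ∃ s ∉ p, ∃ φ : M →ₗ[R] R, Algebra.linearMap R p.ResidueField ∘ₗ φ = s • f := by
  let b := Module.Free.chooseBasis R M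
  obtain ⟨s, hs, y, hy⟩ := exists_algebraMap_residueField_eq_smul p (f ∘ b)
  exact ⟨s, hs, b.constr R y, b.ext fun i => by simpa using hy i⟩

variable {p}

lemma apply_mem_of_one_tmul_eq_zero {n : N} (hn : (1 : p.ResidueField) ⊗ₜ[R] n = 0)
    (f : N →ₗ[R] R) : f n ∈ p := by
  have h := congrArg (TensorProduct.rid R _ ∘ f.lTensor p.ResidueField) hn
  rw [← Ideal.algebraMap_residueField_eq_zero, Algebra.algebraMap_eq_smul_one]
  simpa using h

lemma exists_apply_notMem_of_one_tmul_ne_zero [Module.Free R M] [Module.Finite R M]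
    (π : M →ₗ[R] Q) {m : M} (hm : (1 : p.ResidueField) ⊗ₜ[R] π m ≠ 0) :
    ∃ φ : M →ₗ[R] R, φ m ∉ p ∧ ∀ x, π x = 0 → φ x ∈ p := by
  obtain ⟨ψ, hψ⟩ :
      ∃ ψ : Module.Dual p.ResidueField (p.ResidueField ⊗[R] Q), ψ (1 ⊗ₜ π m) ≠ 0 := by
    simpa using (Module.forall_dual_apply_eq_zero_iff p.ResidueField _).not.2 hm
  obtain ⟨s, hs, φ, hφ⟩ := exists_algebraMap_residueField_comp_eq_smul p
    (ψ.restrictScalars R ∘ₗ TensorProduct.mk R p.ResidueField Q 1 ∘ₗ π)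
  replace hφ (x : M) : algebraMap R p.ResidueField (φ x) = s • ψ (1 ⊗ₜ π x) :=
    LinearMap.congr_fun hφ x
  refine ⟨φ, ?_, fun x hx => ?_⟩
  · rw [← Ideal.algebraMap_residueField_eq_zero, hφ, Algebra.smul_def]
    exact mul_ne_zero (mt Ideal.algebraMap_residueField_eq_zero.1 hs) hψ
  · rw [← Ideal.algebraMap_residueField_eq_zero, hφ, hx, tmul_zero, map_zero, smul_zero]

lemma exists_smul_eq_zero_of_lTensor_residueField_injective [Module.Finite R Q] [Module.Free R N]
    [Module.Finite R N] {l : Q →ₗ[R] N} (hl : Function.Injective (l.lTensor p.ResidueField)) {q : Q}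
    (hq : l q = 0) : ∃ s ∉ p, s • q = 0 := by
  let S := Localization.AtPrime p
  have h_residue : Function.Injective ((l.baseChange S).lTensor (IsLocalRing.ResidueField S)) := by
    rwa [← AlgebraTensorModule.coe_lTensor (A := S), ← EquivLike.injective_comp
      (AlgebraTensorModule.cancelBaseChange R S S p.ResidueField Q), ← LinearEquiv.coe_coe,
      ← LinearMap.coe_comp, AlgebraTensorModule.lTensor_comp_cancelBaseChange, LinearMap.coe_comp,
      LinearEquiv.coe_coe, EquivLike.comp_injective] at hl
  obtain ⟨r, hr⟩ :=
    (IsLocalRing.split_injective_iff_lTensor_residueField_injective (l.baseChange S)).2 h_residue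
  have hq_loc : TensorProduct.mk R S Q 1 q = 0 := by
    simpa [hq] using (LinearMap.congr_fun hr (1 ⊗ₜ q)).symm
  obtain ⟨s, hs⟩ := (IsLocalizedModule.eq_zero_iff p.primeCompl _).1 hq_loc
  exact ⟨s, s.2, hs⟩

variable (p) in
/-- The two cases are whether the map `M ⧸ range A → N` induced by `B` is injective after base
change to the residue field at `p`. -/
lemma exists_smul_mem_range_or_exists_notMem [Module.Finite R L] [Module.Free R M]
    [Module.Finite R M] [Module.Free R N] [Module.Finite R N] {A : L →ₗ[R] M} {B : M →ₗ[R] N}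
    (hBA : B ∘ₗ A = 0) :
    (∀ z, B z = 0 → ∃ s ∉ p, s • z ∈ LinearMap.range A) ∨
    ∃ (m : M) (φ : M →ₗ[R] R) (J : Ideal R), J.FG ∧ J ≤ p ∧ φ m ∉ p ∧
      B m ∈ J • (⊤ : Submodule R N) ∧ ∀ y, φ (A y) ∈ J := by
  let l : (M ⧸ LinearMap.range A) →ₗ[R] N :=
    (LinearMap.range A).liftQ B (LinearMap.range_le_ker_iff.2 hBA)
  by_cases hl : Function.Injective (l.lTensor p.ResidueField)
  · refine Or.inl fun z hz => ?_
    obtain ⟨s, hs, hsz⟩ := exists_smul_eq_zero_of_lTensor_residueField_injective hl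
      (q := Submodule.Quotient.mk z) hz
    exact ⟨s, hs, (Submodule.Quotient.mk_eq_zero _).1 hsz⟩
  · obtain ⟨x, hx, hx₀⟩ : ∃ x, l.lTensor p.ResidueField x = 0 ∧ x ≠ 0 := by
      simpa [injective_iff_map_eq_zero] using hl
    obtain ⟨s, hs, q, hq⟩ := exists_one_tmul_eq_smul p x
    obtain ⟨m, rfl⟩ := Submodule.mkQ_surjective _ q
    have hm : (1 : p.ResidueField) ⊗ₜ[R] (LinearMap.range A).mkQ m ≠ 0 := by
      rw [hq, ← algebraMap_smul p.ResidueField s x]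
      exact smul_ne_zero (mt Ideal.algebraMap_residueField_eq_zero.1 hs) hx₀
    have hBm : (1 : p.ResidueField) ⊗ₜ[R] B m = 0 := by
      simpa [hx, l] using congrArg (l.lTensor p.ResidueField) hq
    obtain ⟨φ, hφm, hφ⟩ := exists_apply_notMem_of_one_tmul_ne_zero _ hm
    let b := Module.Free.chooseBasis R N
    let J := Ideal.span (Set.range (b.repr (B m))) ⊔ LinearMap.range (φ ∘ₗ A)
    have hJ : J.FG := Submodule.FG.sup (Submodule.fg_span (Set.finite_range _))
      (Module.Finite.iff_fg.1 (Module.Finite.range _))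
    have hJp : J ≤ p := by
      refine sup_le (Ideal.span_le.2 ?_) ?_
      · rintro _ ⟨i, rfl⟩
        exact apply_mem_of_one_tmul_eq_zero hBm (b.coord i)
      · rintro _ ⟨y, rfl⟩
        exact hφ _ (by simp)
    have hBJ : ∑ i, b.repr (B m) i • b i ∈ J • (⊤ : Submodule R N) :=
      Submodule.sum_mem _ fun i _ => Submodule.smul_mem_smul
        (Ideal.mem_sup_left (Ideal.subset_span ⟨i, rfl⟩)) trivial
    exact Or.inr ⟨m, φ, J, hJ, hJp, hφm, b.sum_repr (B m) ▸ hBJ,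
      fun y => Ideal.mem_sup_right ⟨y, rfl⟩⟩

end ResidueField

section Support

variable {R : Type u} [CommRing R] {p : PrimeSpectrum R}

variable (p) in
lemma isWideSubcategory_setOf_notMem_support :
    IsWideSubcategory {M : ModuleCat.{u} R | p ∉ Module.support R M} where
  mem_of_iso e h := by rwa [Set.mem_ofPred_eq, ← e.toLinearEquiv.support_eq]
  kernel_mem f hX _ hp := hX (Module.support_subset_of_injective (kernel.ι f).hom
    ((ModuleCat.mono_iff_injective _).1 inferInstance) hp)
  cokernel_mem f _ hY hp := hY (Module.support_subset_of_surjective (cokernel.π f).hom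
    ((ModuleCat.epi_iff_surjective _).1 inferInstance) hp)
  extension_mem S hS h₁ h₃ := by
    rw [Set.mem_ofPred_eq, Module.support_of_exact
      ((ShortComplex.ShortExact.moduleCat_exact_iff_function_exact S).1 hS.exact)
      hS.moduleCat_injective_f hS.moduleCat_surjective_g]
    exact fun hp => hp.elim h₁ h₃

lemma notMem_support_homology_iff (S : ShortComplex (ModuleCat.{u} R)) :
    p ∉ Module.support R S.homology ↔
      ∀ z, S.g z = 0 → ∃ s ∉ p.asIdeal, s • z ∈ LinearMap.range S.f.hom := by
  have h_mk (s : R) (z : LinearMap.ker S.g.hom) :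
      s • (Submodule.Quotient.mk z : S.moduleCatLeftHomologyData.H) = 0 ↔
        s • z.1 ∈ LinearMap.range S.f.hom := by
    rw [← Submodule.Quotient.mk_smul]
    refine (Submodule.Quotient.mk_eq_zero _).trans ⟨?_, ?_⟩
    · rintro ⟨y, hy⟩
      exact ⟨y, congrArg Subtype.val hy⟩
    · rintro ⟨y, hy⟩
      exact ⟨y, Subtype.ext hy⟩
  rw [S.moduleCatHomologyIso.toLinearEquiv.support_eq, Module.notMem_support_iff']
  exact ⟨fun h z hz => (h _).imp fun s hs => ⟨hs.1, (h_mk s ⟨z, hz⟩).1 hs.2⟩,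
    fun h x => by
      obtain ⟨z, rfl⟩ := Submodule.Quotient.mk_surjective _ x
      exact (h z.1 z.2).imp fun s hs => ⟨hs.1, (h_mk s z).2 hs.2⟩⟩

variable [HasDerivedCategory.{w} (ModuleCat.{u} R)]

lemma notMem_support_homologyFunctor_iff (K : CochainComplex (ModuleCat.{u} R) ℤ) {i j k : ℤ}
    (hij : i + 1 = j) (hjk : j + 1 = k) :
    p ∉ Module.support R ((DerivedCategory.homologyFunctor (ModuleCat.{u} R) j).obj
      (DerivedCategory.Q.obj K)) ↔
      ∀ z, K.d j k z = 0 → ∃ s ∉ p.asIdeal, s • z ∈ LinearMap.range (K.d i j).hom := by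
  let e : (DerivedCategory.homologyFunctor _ j).obj (DerivedCategory.Q.obj K) ≅
      (K.sc' i j k).homology :=
    (DerivedCategory.homologyFunctorFactors _ j).app K ≪≫ ShortComplex.homologyMapIso
      (K.isoSc' i j k (by simp; lia) (by simp; lia))
  rw [e.toLinearEquiv.support_eq]
  exact notMem_support_homology_iff (K.sc' i j k)

end Support

open CochainComplex.HomComplex in
lemma map_Q_eq_zero_of_single {C : Type*} [Category C] [Abelian C] [HasDerivedCategory C] {M : C}
    {K : CochainComplex C ℤ} {f : (CochainComplex.singleFunctor C 0).obj M ⟶ K}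
    (g : M ⟶ K.X (-1))
    (h : (HomologicalComplex.singleObjXSelf (ComplexShape.up ℤ) 0 M).inv ≫ f.f 0 =
      g ≫ K.d (-1) 0) :
    DerivedCategory.Q.map f = 0 := by
  have hδ : Cochain.ofHom f = δ (-1) 0 (Cochain.fromSingleMk g (zero_add (-1))) := by
    rw [Cochain.δ_fromSingleMk g _ 0 0 (zero_add 0)]
    apply (Cochain.fromSingleEquiv (zero_add (0 : ℤ))).injective
    rw [Cochain.fromSingleEquiv_fromSingleMk, ← h]
    simp [Cochain.fromSingleEquiv]
  rw [← DerivedCategory.Q.map_zero]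
  exact DerivedCategory.Q_map_eq_of_homotopy _ ((Cochain.equivHomotopy f 0).symm
    ⟨Cochain.fromSingleMk g (zero_add (-1)), by rw [hδ, Cochain.ofHom_zero, add_zero]⟩)

section HomTorsion

variable {T : Type*} [Category T] [Preadditive T] [HasShift T ℤ] {R : Type*} [CommRing R]
  [Linear R T]

/-- The objects `W` such that every morphism from `W` to a shift of `X` is killed by an element
of `S`. -/
def IsHomTorsion (S : Submonoid R) (X : T) : ObjectProperty T :=
  fun W => ∀ (n : ℤ) (φ : W ⟶ X⟦n⟧), ∃ s ∈ S, s • φ = 0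

variable {S : Submonoid R} {X : T}

instance : (IsHomTorsion S X).IsStableUnderRetracts where
  of_retract e h n φ := by
    obtain ⟨s, hs, h_zero⟩ := h n (e.r ≫ φ)
    refine ⟨s, hs, ?_⟩
    rw [← Category.id_comp φ, ← e.retract, Category.assoc, ← Linear.comp_smul, h_zero, comp_zero]

lemma exists_smul_id_eq_zero_of_isHomTorsion (h : IsHomTorsion S X X) :
    ∃ s ∈ S, s • 𝟙 X = 0 := by
  let e : X ≅ X⟦(0 : ℤ)⟧ := ((shiftFunctorZero T ℤ).app X).symm
  obtain ⟨s, hs, h_zero⟩ := h 0 e.hom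
  refine ⟨s, hs, ?_⟩
  rw [← cancel_mono e.hom, Linear.smul_comp, Category.id_comp, h_zero, zero_comp]

instance [HasZeroObject T] [∀ n : ℤ, (shiftFunctor T n).Additive] [Pretriangulated T]
    [∀ n : ℤ, (shiftFunctor T n).Linear R] : (IsHomTorsion S X).IsTriangulated where
  exists_zero := ⟨0, isZero_zero T, fun _ _ => ⟨1, S.one_mem, (isZero_zero T).eq_of_src _ _⟩⟩
  isStableUnderShiftBy k := ⟨fun W h n φ => by
    let e : (X⟦n - k⟧)⟦k⟧ ≅ X⟦n⟧ := (shiftFunctorAdd' T (n - k) k n (by lia)).symm.app X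
    obtain ⟨ψ, hψ⟩ := (shiftFunctor T k).map_surjective (φ ≫ e.inv)
    obtain ⟨s, hs, h_zero⟩ := h (n - k) ψ
    refine ⟨s, hs, ?_⟩
    rw [← cancel_mono e.inv, Linear.smul_comp, ← hψ, ← (shiftFunctor T k).map_smul, h_zero,
      (shiftFunctor T k).map_zero, zero_comp]⟩
  ext₂' Δ hΔ h₁ h₃ := ObjectProperty.le_isoClosure _ _ fun n φ => by
    obtain ⟨s, hs, h_s⟩ := h₁ n (Δ.mor₁ ≫ φ)
    rw [← Linear.comp_smul] at h_s
    obtain ⟨ψ, hψ⟩ := Triangle.yoneda_exact₂ _ hΔ _ h_s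
    obtain ⟨t, ht, h_t⟩ := h₃ n ψ
    exact ⟨t * s, S.mul_mem ht hs, by rw [mul_smul, hψ, ← Linear.comp_smul, h_t, comp_zero]⟩

end HomTorsion

section SmallSupport

variable {R : Type u} [CommRing R] [HasDerivedCategory.{w} (ModuleCat.{u} R)]
  {p : PrimeSpectrum R} {X : DerivedCategory (ModuleCat.{u} R)}

/-- The support of the total homology of `X`, for Thomason's classification. -/
def homologySupport (X : DerivedCategory (ModuleCat.{u} R)) : Set (PrimeSpectrum R) :=
  ⋃ n : ℤ, Module.support R ((DerivedCategory.homologyFunctor (ModuleCat.{u} R) n).obj X)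

lemma exists_smul_eq_zero_of_notMem_support
    (hX : p ∉ Module.support R ((DerivedCategory.homologyFunctor (ModuleCat.{u} R) 0).obj X))
    (φ : (DerivedCategory.singleFunctor (ModuleCat.{u} R) 0).obj (ModuleCat.of R R) ⟶ X) :
    ∃ s ∉ p.asIdeal, s • φ = 0 := by
  let K := DerivedCategory.Q.objPreimage X
  let e : DerivedCategory.Q.obj K ≅ X := DerivedCategory.Q.objObjPreimageIso X
  rw [← ((DerivedCategory.homologyFunctor (ModuleCat.{u} R) 0).mapIso e).toLinearEquiv.support_eq,
    notMem_support_homologyFunctor_iff K (neg_add_cancel 1) (zero_add 1)] at hX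
  let S := (CochainComplex.singleFunctor (ModuleCat.{u} R) 0).obj (ModuleCat.of R R)
  have : S.IsKProjective := (IsFiniteFree.single (ModuleCat.of R R) 0).isKProjective
  obtain ⟨f, hf⟩ := exists_map_Q_eq_of_isKProjective (P := S) K (φ ≫ e.inv)
  let z : K.X 0 :=
    ((HomologicalComplex.singleObjXSelf (ComplexShape.up ℤ) 0 (ModuleCat.of R R)).inv ≫ f.f 0)
      (1 : R)
  have hz : K.d 0 1 z = 0 := by
    have h_zero : IsZero (S.X 1) := HomologicalComplex.isZero_single_obj_X _ _ _ _ (by lia)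
    have h_comp : f.f 0 ≫ K.d 0 1 = 0 := by rw [f.comm, h_zero.eq_zero_of_src (f.f 1), comp_zero]
    exact ConcreteCategory.congr_hom h_comp _
  obtain ⟨s, hs, y, hy⟩ := hX z hz
  refine ⟨s, hs, ?_⟩
  have h_zero : DerivedCategory.Q.map (s • f) = 0 := by
    refine map_Q_eq_zero_of_single (ModuleCat.ofHom (LinearMap.toSpanSingleton R _ y)) ?_
    ext
    change s • z = K.d (-1) 0 ((1 : R) • y)
    rw [one_smul]
    exact hy.symm
  rw [DerivedCategory.Q.map_smul, hf] at h_zero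
  rwa [← cancel_mono e.inv, Linear.smul_comp, zero_comp]

lemma IsSmallObject.exists_smul_id_eq_zero (hXs : IsSmallObject X) (hX : p ∉ homologySupport X) :
    ∃ s ∉ p.asIdeal, s • 𝟙 X = 0 := by
  refine exists_smul_id_eq_zero_of_isHomTorsion (S := p.asIdeal.primeCompl) <|
    hXs _ (isThickSubcategory_setOf (IsHomTorsion p.asIdeal.primeCompl X)) fun n φ =>
      exists_smul_eq_zero_of_notMem_support ?_ φ
  exact (isWideSubcategory_setOf_notMem_support p).mem_of_iso
    (((DerivedCategory.homologyFunctor (ModuleCat.{u} R) 0).shiftIso n 0 n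
      (add_zero n)).symm.app X) fun hp => hX (Set.mem_iUnion.2 ⟨n, hp⟩)

end SmallSupport

section Tensor

open MonoidalCategory TensorProduct

variable {R : Type u} [CommRing R]

/-- The termwise tensor product of a cochain complex with a module, as a functor of the module. -/
noncomputable def tensorComplex (Y : CochainComplex (ModuleCat.{u} R) ℤ) :
    ModuleCat.{u} R ⥤ CochainComplex (ModuleCat.{u} R) ℤ where
  obj M := ((tensorRight M).mapHomologicalComplex _).obj Y
  map g :=
    { f := fun i => Y.X i ◁ g
      comm' := fun _ _ _ => whisker_exchange _ _ }

instance (Y : CochainComplex (ModuleCat.{u} R) ℤ) : (tensorComplex Y).Additive where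
  map_add := by
    intros
    ext i : 1
    exact MonoidalPreadditive.whiskerLeft_add _ _

/-- The unit isomorphism `Y ⊗ R ≅ Y`. -/
noncomputable def tensorComplexUnit (Y : CochainComplex (ModuleCat.{u} R) ℤ) :
    (tensorComplex Y).obj (ModuleCat.of R R) ≅ Y :=
  (NatIso.mapHomologicalComplex (rightUnitorNatIso (ModuleCat.{u} R)) _).app Y

lemma isZero_tensorComplex_obj_X {Y : CochainComplex (ModuleCat.{u} R) ℤ} {i : ℤ}
    (h : IsZero (Y.X i)) (M : ModuleCat.{u} R) : IsZero (((tensorComplex Y).obj M).X i) :=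
  (tensorRight M).map_isZero h

lemma shortExact_map_tensorComplex {Y : CochainComplex (ModuleCat.{u} R) ℤ}
    (hY : ∀ i, Module.Flat R (Y.X i)) {S : ShortComplex (ModuleCat.{u} R)} (hS : S.ShortExact) :
    (S.map (tensorComplex Y)).ShortExact := by
  refine HomologicalComplex.shortExact_of_degreewise_shortExact _ fun i =>
    ModuleCat.shortComplex_shortExact _ ?_ ?_ ?_
  · exact lTensor_exact (Y.X i)
      ((ShortComplex.ShortExact.moduleCat_exact_iff_function_exact S).1 hS.exact)
      hS.moduleCat_surjective_g
  · exact Module.Flat.lTensor_preserves_injective_linearMap (M := Y.X i) S.f.hom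
      hS.moduleCat_injective_f
  · exact LinearMap.lTensor_surjective (Y.X i) hS.moduleCat_surjective_g

section Coordinates

variable {ι : Type*}

open Filter

variable (R) in
/-- The projection of a free module onto the coordinates in `s`. -/
noncomputable def coordProj (s : Finset ι) : (ι →₀ R) →ₗ[R] ι →₀ R :=
  ∑ j ∈ s, Finsupp.lsingle j ∘ₗ Finsupp.lapply j

lemma eventually_coordProj_eq (x : ι →₀ R) : ∀ᶠ s in atTop, coordProj R s x = x := by
  filter_upwards [eventually_ge_atTop x.support] with s hs
  rw [coordProj, LinearMap.sum_apply]
  exact (Finsupp.sum_of_support_subset x hs _ (by simp)).symm.trans x.sum_single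

lemma eventually_lTensor_coordProj_eq {V : Type*} [AddCommGroup V] [Module R V]
    (z : V ⊗[R] (ι →₀ R)) : ∀ᶠ s in atTop, (coordProj R s).lTensor V z = z := by
  induction z using TensorProduct.induction_on with
  | zero => simp
  | tmul v x =>
    filter_upwards [eventually_coordProj_eq x] with s hs
    rw [LinearMap.lTensor_tmul, hs]
  | add z w hz hw =>
    filter_upwards [hz, hw] with s hsz hsw
    rw [map_add, hsz, hsw]

lemma eventually_lTensor_coordProj_comp_eq {U V : Type*} [AddCommGroup V] [Module R V]
    [AddCommGroup U] [Module R U] [Module.Finite R U] (f : U →ₗ[R] V ⊗[R] (ι →₀ R)) :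
    ∀ᶠ s in atTop, (coordProj R s).lTensor V ∘ₗ f = f := by
  obtain ⟨G, hG⟩ := Module.Finite.fg_top (R := R) (M := U)
  filter_upwards [(eventually_all_finset G).2 fun g _ =>
    eventually_lTensor_coordProj_eq (f g)] with s hs
  exact LinearMap.ext_on hG hs

end Coordinates

lemma IsFiniteFree.exists_comp_map_coordProj_eq {P Y : CochainComplex (ModuleCat.{u} R) ℤ}
    {ι : Type u} (hP : IsFiniteFree P)
    (f : P ⟶ (tensorComplex Y).obj (ModuleCat.of R (ι →₀ R))) :
    ∃ s, f ≫ (tensorComplex Y).map (ModuleCat.ofHom (coordProj R s)) = f := by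
  obtain ⟨a, b, hab⟩ := hP.exists_bounds
  have := hP.finite
  obtain ⟨s, hs⟩ := ((Filter.eventually_all_finset (Finset.Icc a b)).2 fun i _ =>
    eventually_lTensor_coordProj_comp_eq (f.f i).hom).exists
  refine ⟨s, HomologicalComplex.hom_ext _ _ fun i => ?_⟩
  by_cases hi : i < a ∨ b < i
  · exact (hab i hi).eq_of_src _ _
  · exact ModuleCat.hom_ext (hs i (Finset.mem_Icc.2 (by lia)))

variable [HasDerivedCategory.{w} (ModuleCat.{u} R)]
  {D : ObjectProperty (DerivedCategory (ModuleCat.{u} R))} [D.IsTriangulated]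
  [D.IsClosedUnderIsomorphisms] {Y : CochainComplex (ModuleCat.{u} R) ℤ}

lemma isNegligible_perfect {r : R} {A : DerivedCategory (ModuleCat.{u} R)}
    (h : ∀ P, IsFiniteFree P → ∀ φ : DerivedCategory.Q.obj P ⟶ A,
      r • φ ∈ factorSubmodule R D (DerivedCategory.Q.obj P) A) :
    IsNegligible (perfect R) D r A := by
  refine IsNegligible.retractClosure ?_
  rintro W ⟨P, hP, ⟨e⟩⟩ φ
  simpa using comp_mem_factorSubmodule e.inv (h P hP (e.hom ≫ φ))

lemma map_tensorComplex_coordProj_mem_factorSubmodule (hY : D (DerivedCategory.Q.obj Y))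
    {ι : Type u} (s : Finset ι) :
    DerivedCategory.Q.map ((tensorComplex Y).map (ModuleCat.ofHom (coordProj R s))) ∈
      factorSubmodule R D _ _ := by
  have h_sum : ModuleCat.ofHom (coordProj R s) = ∑ j ∈ s,
      ModuleCat.ofHom (Finsupp.lapply j : (ι →₀ R) →ₗ[R] R) ≫
        ModuleCat.ofHom (Finsupp.lsingle j) := by
    ext : 1
    simp [coordProj, ModuleCat.hom_sum]
  rw [h_sum, Functor.map_sum, Functor.map_sum]
  refine Submodule.sum_mem _ fun j _ => ?_
  rw [Functor.map_comp, Functor.map_comp]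
  exact mem_factorSubmodule_of_prop
    (D.prop_of_iso (DerivedCategory.Q.mapIso (tensorComplexUnit Y)).symm hY) _ _

lemma isNegligible_tensorComplex_finsupp (hY : D (DerivedCategory.Q.obj Y)) (ι : Type u) :
    IsNegligible (perfect R) D (1 : R)
      (DerivedCategory.Q.obj ((tensorComplex Y).obj (ModuleCat.of R (ι →₀ R)))) := by
  refine isNegligible_perfect fun P hP φ => ?_
  have := hP.isKProjective
  obtain ⟨f, rfl⟩ := exists_map_Q_eq_of_isKProjective _ φ
  obtain ⟨s, hs⟩ := hP.exists_comp_map_coordProj_eq f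
  rw [one_smul, ← hs, Functor.map_comp]
  exact comp_mem_factorSubmodule _ (map_tensorComplex_coordProj_mem_factorSubmodule hY s)

lemma eq_zero_of_isKProjective {C : Type*} [Category C] [Abelian C] [HasDerivedCategory C]
    {P K : CochainComplex C ℤ} [P.IsKProjective] (h : ∀ i, IsZero (P.X i) ∨ IsZero (K.X i))
    (φ : DerivedCategory.Q.obj P ⟶ DerivedCategory.Q.obj K) : φ = 0 := by
  obtain ⟨f, rfl⟩ := exists_map_Q_eq_of_isKProjective K φ
  have hf : f = 0 := HomologicalComplex.hom_ext _ _ fun i =>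
    (h i).elim (fun hP => hP.eq_of_src _ _) fun hK => hK.eq_of_tgt _ _
  rw [hf, DerivedCategory.Q.map_zero]

lemma eq_zero_of_isKProjective_shift {C : Type*} [Category C] [Abelian C] [HasDerivedCategory C]
    {P K : CochainComplex C ℤ} [P.IsKProjective] {n : ℤ}
    (h : ∀ i, IsZero (P.X i) ∨ IsZero (K.X (i + n)))
    (φ : DerivedCategory.Q.obj P ⟶ (DerivedCategory.Q.obj K)⟦n⟧) : φ = 0 := by
  rw [← cancel_mono ((DerivedCategory.Q.commShiftIso n).inv.app K), zero_comp]
  exact eq_zero_of_isKProjective (K := K⟦n⟧) h _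

/-- Dimension shifting along `0 → ker c → R^(M) → M → 0`: tensored with `Y`, the middle term
contributes only morphisms which factor through `D`. -/
lemma mem_factorSubmodule_shift_tensorComplex (hDP : D ≤ perfect R)
    (hY : ∀ i, Module.Flat R (Y.X i)) (hDY : D (DerivedCategory.Q.obj Y))
    {W : DerivedCategory (ModuleCat.{u} R)} (hW : perfect R W) {k l : ℤ} (hkl : 1 + k = l)
    (h : ∀ (M : ModuleCat.{u} R) (φ : W ⟶ (DerivedCategory.Q.obj ((tensorComplex Y).obj M))⟦l⟧),
      φ ∈ factorSubmodule R D _ _)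
    (M : ModuleCat.{u} R) (φ : W ⟶ (DerivedCategory.Q.obj ((tensorComplex Y).obj M))⟦k⟧) :
    φ ∈ factorSubmodule R D _ _ := by
  let c : (M →₀ R) →ₗ[R] M := Finsupp.linearCombination R id
  have hS : c.shortComplexKer.ShortExact :=
    LinearMap.shortExact_shortComplexKer (Finsupp.linearCombination_id_surjective R M)
  have hT := Triangle.shift_distinguished _ (rot_of_distTriang _
    (DerivedCategory.triangleOfSES_distinguished (shortExact_map_tensorComplex hY hS))) k
  have hfree := (isNegligible_tensorComplex_finsupp hDY (M : Type u)).shift k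
  let K : DerivedCategory (ModuleCat.{u} R) :=
    DerivedCategory.Q.obj ((tensorComplex Y).obj (ModuleCat.of R c.ker))
  let e : K⟦l⟧ ≅ (K⟦(1 : ℤ)⟧)⟦k⟧ := (shiftFunctorAdd' _ 1 k l hkl).app K
  have h_shift (ψ : W ⟶ (K⟦(1 : ℤ)⟧)⟦k⟧) : ψ ∈ factorSubmodule R D _ _ := by
    simpa using mem_factorSubmodule_comp (h (ModuleCat.of R c.ker) (ψ ≫ e.inv)) e.hom
  have h_mem : (1 * 1 : R) • φ ∈ factorSubmodule R D W _ :=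
    hfree.mul_smul_mem_factorSubmodule hDP hT hW (Submodule.smul_mem _ _ (h_shift _))
  rwa [mul_one, one_smul] at h_mem

lemma IsFiniteFree.isNegligible_tensorComplex (hDP : D ≤ perfect R) (hY : IsFiniteFree Y)
    (hDY : D (DerivedCategory.Q.obj Y)) (M : ModuleCat.{u} R) :
    IsNegligible (perfect R) D (1 : R) (DerivedCategory.Q.obj ((tensorComplex Y).obj M)) := by
  refine isNegligible_perfect fun P hP φ => ?_
  have hP_perfect : perfect R (DerivedCategory.Q.obj P) :=
    (finiteFree R).le_retractClosure _ ⟨P, hP, ⟨Iso.refl _⟩⟩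
  have := hP.isKProjective
  have := hY.free
  obtain ⟨a, _, ha⟩ := hP.exists_bounds
  obtain ⟨_, b, hb⟩ := hY.exists_bounds
  have h_shift (k : ℤ) (hk : k ≤ max 0 (b - a + 1)) : ∀ (M : ModuleCat.{u} R)
      (φ : DerivedCategory.Q.obj P ⟶ (DerivedCategory.Q.obj ((tensorComplex Y).obj M))⟦k⟧),
      φ ∈ factorSubmodule R D _ _ := by
    induction k, hk using Int.leInductionDown with
    | base =>
      intro M φ
      rw [eq_zero_of_isKProjective_shift (fun i => ?_) φ]
      · exact zero_mem _
      · exact (lt_or_ge i a).imp (fun hi => ha i (.inl hi)) fun hi =>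
          isZero_tensorComplex_obj_X (hb _ (.inr (by lia))) M
    | pred k _ ih =>
      exact mem_factorSubmodule_shift_tensorComplex hDP (fun i => inferInstance) hDY hP_perfect
        (add_sub_cancel 1 k) ih
  let e := (shiftFunctorZero _ ℤ).app (DerivedCategory.Q.obj ((tensorComplex Y).obj M))
  simpa using mem_factorSubmodule_comp (h_shift 0 (le_max_left _ _) M (φ ≫ e.inv)) e.hom

end Tensor

section TStructure

open Triangulated

variable {T : Type*} [Category T] [HasZeroObject T] [Preadditive T] [HasShift T ℤ]
  [∀ n : ℤ, (shiftFunctor T n).Additive] [Pretriangulated T] (t : TStructure T)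

instance : t.bounded.IsStableUnderRetracts where
  of_retract := by
    rintro X Y e ⟨⟨a, ha⟩, b, hb⟩
    refine ⟨⟨a, (t.isGE_iff_orthogonal (a - 1) a (by lia) X).2 fun Z f _ => ?_⟩,
      b, (t.isLE_iff_orthogonal b (b + 1) rfl X).2 fun Z f _ => ?_⟩
    · rw [← Category.comp_id f, ← e.retract, ← Category.assoc, t.zero (f ≫ e.i) (a - 1) a,
        zero_comp]
    · rw [← Category.id_comp f, ← e.retract, Category.assoc, t.zero (e.r ≫ f) b (b + 1),
        comp_zero]

variable {R : Type*} [CommRing R] [Linear R T]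

lemma annihilator_end_le_truncLT (n : ℤ) (X : T) :
    Module.annihilator R (X ⟶ X) ≤
      Module.annihilator R ((t.truncLT n).obj X ⟶ (t.truncLT n).obj X) := fun r hr => by
  rw [mem_annihilator_end_iff] at hr ⊢
  have h : (t.truncLTι n).app X ≫ (r • 𝟙 X) = 0 := by rw [hr, comp_zero]
  exact t.to_truncLT_obj_ext (by simpa using h)

lemma annihilator_end_le_truncGE (n : ℤ) (X : T) :
    Module.annihilator R (X ⟶ X) ≤
      Module.annihilator R ((t.truncGE n).obj X ⟶ (t.truncGE n).obj X) := fun r hr => by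
  rw [mem_annihilator_end_iff] at hr ⊢
  have h : (r • 𝟙 X) ≫ (t.truncGEπ n).app X = 0 := by rw [hr, zero_comp]
  exact t.from_truncGE_obj_ext (by simpa using h)

end TStructure

section Torsion

open TensorProduct

variable {R : Type u} [CommRing R] {J : Ideal R}

lemma annihilator_moduleCat_end_le (M : ModuleCat.{u} R) :
    Module.annihilator R (M ⟶ M) ≤ Module.annihilator R M := fun _ hr =>
  Module.mem_annihilator.2 (ConcreteCategory.congr_hom (mem_annihilator_end_iff.1 hr))

lemma tmul_eq_zero_of_mem_smul_top {M N : Type*} [AddCommGroup M] [Module R M] [AddCommGroup N]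
    [Module R N] (hJ : J ≤ Module.annihilator R M) {n : N} (hn : n ∈ J • (⊤ : Submodule R N))
    (x : M) : n ⊗ₜ[R] x = 0 := by
  refine Submodule.smul_induction_on hn (fun r hr _ _ => ?_) fun a b ha hb => ?_
  · rw [smul_tmul, Module.mem_annihilator.1 (hJ hr), tmul_zero]
  · rw [add_tmul, ha, hb, add_zero]

lemma exists_single_tensorComplex_comp_eq_smul_id (Y : CochainComplex (ModuleCat.{u} R) ℤ)
    {i j k : ℤ} (hij : i + 1 = j) (hjk : j + 1 = k) (m : Y.X j) (φ : Y.X j →ₗ[R] R)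
    (hm : Y.d j k m ∈ J • (⊤ : Submodule R (Y.X k))) (hφ : ∀ y, φ (Y.d i j y) ∈ J)
    {M : ModuleCat.{u} R} (hM : J ≤ Module.annihilator R M) :
    ∃ (f : (HomologicalComplex.single _ (ComplexShape.up ℤ) j).obj M ⟶ (tensorComplex Y).obj M)
      (g : (tensorComplex Y).obj M ⟶ (HomologicalComplex.single _ (ComplexShape.up ℤ) j).obj M),
      f ≫ g = φ m • 𝟙 _ := by
  let a : M ⟶ ((tensorComplex Y).obj M).X j := ModuleCat.ofHom (TensorProduct.mk R (Y.X j) M m)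
  let β : Y.X j →ₗ[R] M →ₗ[R] M := LinearMap.lsmul R M ∘ₗ φ
  let b : ((tensorComplex Y).obj M).X j ⟶ M := ModuleCat.ofHom (TensorProduct.lift β)
  have hab : a ≫ b = φ m • 𝟙 M := by
    ext x
    exact TensorProduct.lift.tmul (f' := β) m x
  refine ⟨HomologicalComplex.mkHomFromSingle a ?_, HomologicalComplex.mkHomToSingle b ?_, ?_⟩
  · rintro _ rfl
    obtain rfl := hjk
    ext x
    exact tmul_eq_zero_of_mem_smul_top hM hm x
  · intro i' hi'
    obtain rfl : i' = i := add_right_cancel (Eq.trans hi' hij.symm)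
    exact ModuleCat.hom_ext (TensorProduct.ext' fun y x => Module.mem_annihilator.1 (hM (hφ y)) x)
  · apply HomologicalComplex.from_single_hom_ext
    rw [HomologicalComplex.comp_f, HomologicalComplex.mkHomFromSingle_f,
      HomologicalComplex.mkHomToSingle_f, Category.assoc, reassoc_of% hab,
      HomologicalComplex.smul_f_apply, HomologicalComplex.id_f, Linear.smul_comp, Linear.comp_smul,
      Category.id_comp, Iso.hom_inv_id]

variable [HasDerivedCategory.{w} (ModuleCat.{u} R)]
  {D : ObjectProperty (DerivedCategory (ModuleCat.{u} R))} [D.IsTriangulated]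
  [D.IsClosedUnderIsomorphisms]

variable (R) in
lemma perfect_le_bounded : perfect R ≤ DerivedCategory.TStructure.t.bounded := by
  refine (ObjectProperty.retractClosure_le_iff _ _).2 ?_
  rintro X ⟨P, hP, ⟨e⟩⟩
  obtain ⟨a, b, hab⟩ := hP.exists_bounds
  have : P.IsStrictlyGE a := (CochainComplex.isStrictlyGE_iff _ _).2 fun i hi => hab i (.inl hi)
  have : P.IsStrictlyLE b := (CochainComplex.isStrictlyLE_iff _ _).2 fun i hi => hab i (.inr hi)
  exact DerivedCategory.TStructure.t.bounded.prop_of_iso e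
    ⟨⟨a, inferInstance⟩, b, inferInstance⟩

lemma IsFiniteFree.isNegligible_single (hDP : D ≤ perfect R)
    {Y : CochainComplex (ModuleCat.{u} R) ℤ} (hY : IsFiniteFree Y)
    (hDY : D (DerivedCategory.Q.obj Y)) {i j k : ℤ} (hij : i + 1 = j) (hjk : j + 1 = k)
    (m : Y.X j) (φ : Y.X j →ₗ[R] R) (hm : Y.d j k m ∈ J • (⊤ : Submodule R (Y.X k)))
    (hφ : ∀ y, φ (Y.d i j y) ∈ J) {M : ModuleCat.{u} R} (hM : J ≤ Module.annihilator R M) :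
    IsNegligible (perfect R) D (φ m)
      ((DerivedCategory.singleFunctor (ModuleCat.{u} R) 0).obj M) := by
  obtain ⟨f, g, hfg⟩ := exists_single_tensorComplex_comp_eq_smul_id Y hij hjk m φ hm hφ hM
  have h_single : IsNegligible (perfect R) D (φ m)
      (DerivedCategory.Q.obj
        ((HomologicalComplex.single (ModuleCat.{u} R) (ComplexShape.up ℤ) j).obj M)) := by
    intro W hW ψ
    have h_mem := mem_factorSubmodule_comp (hY.isNegligible_tensorComplex hDP hDY M hW
      (ψ ≫ DerivedCategory.Q.map f)) (DerivedCategory.Q.map g)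
    rwa [one_smul, Category.assoc, ← DerivedCategory.Q.map_comp, hfg, DerivedCategory.Q.map_smul,
      DerivedCategory.Q.map_id, Linear.comp_smul, Category.comp_id] at h_mem
  exact IsNegligible.of_iso (h_single.shift j)
    (((DerivedCategory.singleFunctors (ModuleCat.{u} R)).shiftIso j 0 j (add_zero j)).app M)

variable (D) in
/-- Every module killed by `J`, viewed as a complex in degree `0`, is negligible for `s`. -/
def IsNegligibleOnModules (s : R) (J : Ideal R) : Prop :=
  ∀ M : ModuleCat.{u} R, J ≤ Module.annihilator R M →
    IsNegligible (perfect R) D s ((DerivedCategory.singleFunctor (ModuleCat.{u} R) 0).obj M)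

lemma IsNegligibleOnModules.pow (hDP : D ≤ perfect R) {s : R} (h : IsNegligibleOnModules D s J)
    (k : ℕ) : IsNegligibleOnModules D (s ^ k) (J ^ k) := by
  induction k with
  | zero =>
    intro M hM
    have : Subsingleton M := Module.annihilator_eq_top_iff.1 (by simpa using hM)
    exact .of_isZero (Functor.map_isZero _ (ModuleCat.isZero_of_subsingleton M)) _
  | succ k ih =>
    intro M hM
    let N : Submodule R M := J • ⊤
    let S : ShortComplex (ModuleCat.{u} R) :=
      ModuleCat.shortComplexOfCompEqZero N.subtype N.mkQ
        (LinearMap.exact_subtype_mkQ N).linearMap_comp_eq_zero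
    have hS : S.ShortExact := ModuleCat.shortComplex_shortExact _ (LinearMap.exact_subtype_mkQ N)
      N.subtype_injective N.mkQ_surjective
    have hN : J ^ k ≤ N.annihilator := by
      rw [Submodule.le_annihilator_iff, ← Submodule.mul_smul, ← pow_succ,
        ← Submodule.le_annihilator_iff, Submodule.annihilator_top]
      exact hM
    have hMN : J ≤ Module.annihilator R (M ⧸ N) := by
      rw [Submodule.annihilator_quotient]
      exact fun r hr => Submodule.mem_colon.2 fun x _ => Submodule.smul_mem_smul hr trivial
    rw [pow_succ]
    exact IsNegligible.ext₂ hDP hS.singleTriangle_distinguished (ih _ hN) (h _ hMN)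

lemma IsNegligibleOnModules.isNegligible_of_isGE_of_isLE (hDP : D ≤ perfect R) {s : R}
    (h : IsNegligibleOnModules D s J) (d : ℕ) :
    ∀ (a : ℤ) (X : DerivedCategory (ModuleCat.{u} R)) [X.IsGE a] [X.IsLE (a + d - 1)],
      J ≤ Module.annihilator R (X ⟶ X) → IsNegligible (perfect R) D (s ^ d) X := by
  let t := DerivedCategory.TStructure.t (C := ModuleCat.{u} R)
  induction d with
  | zero =>
    intro a X _ _ _
    exact .of_isZero (t.isZero X (a + (0 : ℕ) - 1) a) _
  | succ d ih =>
    intro a X _ _ hX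
    let A := (t.truncLT (a + 1)).obj X
    let B := (t.truncGE (a + 1)).obj X
    have : A.IsGE a := inferInstance
    have : A.IsLE a := inferInstance
    have : B.IsLE (a + 1 + d - 1) := by
      have : X.IsLE (a + 1 + d - 1) := by
        convert (inferInstance : X.IsLE (a + (d + 1 : ℕ) - 1)) using 1
        lia
      infer_instance
    have hA : IsNegligible (perfect R) D s A := by
      obtain ⟨M, ⟨e⟩⟩ := DerivedCategory.exists_iso_singleFunctor_obj_of_isGE_of_isLE A a
      refine (((h M ?_).shift (-a)).of_iso
        (((DerivedCategory.singleFunctors (ModuleCat.{u} R)).shiftIso (-a) a 0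
          (neg_add_cancel a)).app M)).of_iso e.symm
      refine le_trans ?_ (annihilator_moduleCat_end_le M)
      exact ((hX.trans (annihilator_end_le_truncLT _ _ X)).trans
        (annihilator_end_le_of_retract (Retract.ofIso e.symm))).trans (annihilator_end_map_le _ M)
    have hB : IsNegligible (perfect R) D (s ^ d) B :=
      ih (a + 1) B (hX.trans (annihilator_end_le_truncGE t _ X))
    rw [pow_succ']
    exact IsNegligible.ext₂ hDP (t.triangleLTGE_distinguished (a + 1) X) hA hB

end Torsion

section LocalNilpotence

variable {R : Type u} [CommRing R] [HasDerivedCategory.{w} (ModuleCat.{u} R)]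
  {D : ObjectProperty (DerivedCategory (ModuleCat.{u} R))} [D.IsTriangulated]
  [D.IsClosedUnderIsomorphisms]

lemma IsNegligibleOnModules.exists_pow_smul_id_mem_factorSubmodule (hDP : D ≤ perfect R)
    {J : Ideal R} (hJ : J.FG) {s : R} (h : IsNegligibleOnModules D s J)
    {Z : DerivedCategory (ModuleCat.{u} R)} (hZ : perfect R Z) (hJZ : IsPowerTorsion _ J Z) :
    ∃ n : ℕ, s ^ n • 𝟙 Z ∈ factorSubmodule R D Z Z := by
  obtain ⟨k, hk⟩ :=
    Ideal.exists_pow_le_of_le_radical_of_fg (isPowerTorsion_iff_le_radical.1 hJZ) hJ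
  obtain ⟨⟨a, _⟩, b, hb⟩ := perfect_le_bounded R Z hZ
  have : Z.IsLE (a + (b + 1 - a).toNat - 1) :=
    DerivedCategory.TStructure.t.isLE_of_le Z b _ (by lia)
  refine ⟨k * (b + 1 - a).toNat, ?_⟩
  rw [pow_mul]
  exact (h.pow hDP k).isNegligible_of_isGE_of_isLE hDP _ a Z hk hZ (𝟙 Z)

lemma exists_isNegligibleOnModules_of_mem_homologySupport (hDP : D ≤ perfect R)
    {p : PrimeSpectrum R} {Y : DerivedCategory (ModuleCat.{u} R)} (hY : D Y)
    (hp : p ∈ homologySupport Y) :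
    ∃ s ∉ p.asIdeal, ∃ J : Ideal R, J.FG ∧ J ≤ p.asIdeal ∧ IsNegligibleOnModules D s J := by
  obtain ⟨n, hp⟩ := Set.mem_iUnion.1 hp
  obtain ⟨P, hP, hDP', ⟨e⟩⟩ := exists_retract_isFiniteFree hY (hDP Y hY)
  have hpP : p ∈ Module.support R
      ((DerivedCategory.homologyFunctor (ModuleCat.{u} R) n).obj (DerivedCategory.Q.obj P)) :=
    Module.support_subset_of_injective
      ((DerivedCategory.homologyFunctor (ModuleCat.{u} R) n).map e.i).hom
      ((ModuleCat.mono_iff_injective _).1 inferInstance) hp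
  have := hP.free
  have := hP.finite
  have hd : (P.d n (n + 1)).hom ∘ₗ (P.d (n - 1) n).hom = 0 := by
    rw [← ModuleCat.hom_comp, P.d_comp_d, ModuleCat.hom_zero]
  obtain h | ⟨m, φ, J, hJ, hJp, hs, hm, hφ⟩ := exists_smul_mem_range_or_exists_notMem p.asIdeal hd
  · exact absurd hpP
      ((notMem_support_homologyFunctor_iff P (sub_add_cancel n 1) rfl).2 h)
  · exact ⟨φ m, hs, J, hJ, hJp, fun M hM =>
      hP.isNegligible_single hDP hDP' (sub_add_cancel n 1) rfl m φ hm hφ hM⟩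

end LocalNilpotence

section Conclusion

variable {R : Type u} [CommRing R] [HasDerivedCategory.{w} (ModuleCat.{u} R)]
  {D : Set (DerivedCategory (ModuleCat.{u} R))} {X : DerivedCategory (ModuleCat.{u} R)}

lemma homologySupport_subset_of_mem_fSet_gSet (hX : X ∈ fSet (gSet D)) :
    homologySupport X ⊆ ⋃ Y ∈ D, homologySupport Y := by
  intro p hpX
  by_contra hpD
  have h_wide := isWideSubcategory_setOf_notMem_support p
  obtain ⟨n, hn⟩ := Set.mem_iUnion.1 hpX
  refine Set.mem_sInter.1 (hX.2 n) _ ⟨h_wide, ?_⟩ hn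
  rintro M ⟨Y, hY, m, ⟨e⟩⟩
  exact h_wide.mem_of_iso e fun hpY => hpD (Set.mem_biUnion hY (Set.mem_iUnion.2 ⟨m, hpY⟩))

lemma IsThickSubcategory.mem_of_homologySupport_subset (hD : IsThickSubcategory D)
    (hDsmall : ∀ Y ∈ D, IsSmallObject Y) (hX : IsSmallObject X)
    (hXD : homologySupport X ⊆ ⋃ Y ∈ D, homologySupport Y) : X ∈ D := by
  let P : ObjectProperty (DerivedCategory (ModuleCat.{u} R)) := (· ∈ D)
  have : P.IsTriangulated := hD.isTriangulated
  have : P.IsStableUnderRetracts := hD.isStableUnderRetracts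
  have hP : P ≤ perfect R := fun Y hY => perfect_of_isSmallObject (hDsmall Y hY)
  have hX_perfect : (ObjectProperty.singleton X).triangEnvelope ≤ perfect R :=
    (ObjectProperty.triangEnvelope_le_iff _).2
      (ObjectProperty.singleton_le_iff.2 (perfect_of_isSmallObject hX))
  suffices h : (ObjectProperty.singleton X).triangEnvelope ≤ P from
    h X (ObjectProperty.le_triangEnvelope _ _ (by simp))
  refine le_of_forall_primeSpectrum (R := R) fun p => ?_
  by_cases hp : p ∈ ⋃ Y ∈ D, homologySupport Y
  · obtain ⟨Y, hY, hpY⟩ := Set.mem_iUnion₂.1 hp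
    obtain ⟨s, hs, J, hJ, hJp, h⟩ :=
      exists_isNegligibleOnModules_of_mem_homologySupport hP hY hpY
    exact ⟨s, hs, J, hJ, hJp, fun Z hZ hJZ =>
      h.exists_pow_smul_id_mem_factorSubmodule hP hJ (hX_perfect Z hZ) hJZ⟩
  · obtain ⟨s, hs, hsX⟩ := hX.exists_smul_id_eq_zero (mt (@hXD p) hp)
    refine ⟨s, hs, ⊥, Submodule.fg_bot, bot_le, fun Z hZ _ => ?_⟩
    obtain ⟨n, hn⟩ := exists_pow_smul_id_eq_zero_of_triangEnvelope hsX hZ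
    exact ⟨n, hn ▸ (factorSubmodule R P Z Z).zero_mem⟩

end Conclusion

/-- Corollary 2.2, from Thomason's theorem: for any commutative ring
`R`, the map `f` from wide subcategories of `C₀` to thick subcategories of small objects
of `D(R)` is surjective: for every thick subcategory `D` of small objects,
`f(g(D)) = D`. -/
theorem f_surjective (R : Type u) [CommRing R]
    [HasDerivedCategory.{w} (ModuleCat.{u} R)]
    (D : Set (DerivedCategory (ModuleCat.{u} R))) (hD : IsThickSubcategory D)
    (hDsmall : ∀ X ∈ D, IsSmallObject X) :
    fSet (gSet D) = D := by
  refine Set.Subset.antisymm (fun X hX => ?_) fun X hX => ⟨hDsmall X hX, fun n => ?_⟩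
  · exact hD.mem_of_homologySupport_subset hDsmall hX.1
      (homologySupport_subset_of_mem_fSet_gSet hX)
  · exact Set.mem_sInter.2 fun C hC => hC.2 ⟨X, hX, n, ⟨Iso.refl _⟩⟩
end

section
/- Let R be a ring and M a left R-module. If the complex S^0 M (M concentrated in degree 0) is a small object of D(R), then M has finite projective dimension, i.e. there is an i ≥ 0 such that Ext^j_R(M, N) = 0 for all R-modules N and all j > i. -/
open CategoryTheory CategoryTheory.Limits CategoryTheory.Pretriangulated ZeroObject

universe w u

/-- An `R`-module `M` has finite projective dimension if there is an `i` such that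
`Ext^j(M, N) = 0` for all modules `N` and all `j > i`. -/
def HasFiniteProjectiveDimension (R : Type u) [Ring R] (M : ModuleCat.{u} R) : Prop :=
  ∃ i : ℕ, ∀ (N : ModuleCat.{u} R) (j : ℕ), i < j →
    Subsingleton (((_root_.Ext ℤ (ModuleCat.{u} R) j).obj (Opposite.op M)).obj N)

/-!
The objects `X` of `D(R)` such that `Hom(X, S⁰N⟦j⟧)` vanishes for all modules `N` and all `j` above
a bound depending only on `X` form a thick subcategory. It contains `S⁰R` because `R` is projective,
hence it contains every small object; for `X = S⁰M` these groups are `Ext^j(M, N)`.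
-/

section BoundedAbove

/-- The objects `X` of a category with shift such that the groups `Hom(X, Y⟦j⟧)` vanish for all `Y`
in `S` as soon as `j` exceeds a bound, which may depend on `X` but not on `Y`. Vanishing is encoded
as `Subsingleton`, so that no additive structure on the category is required. -/
def homBoundedAbove {T : Type*} [Category T] [HasShift T ℤ] (S : Set T) : Set T :=
  {X | ∃ n : ℤ, ∀ Y ∈ S, ∀ j : ℤ, n < j → Subsingleton (ShiftedHom X Y j)}

lemma subsingleton_shiftedHom_shift_iff {T A : Type*} [Category T] [AddGroup A] [HasShift T A]
    (X Y : T) {i m j : A} (hij : i + m = j) :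
    Subsingleton (ShiftedHom (X⟦m⟧) Y j) ↔ Subsingleton (ShiftedHom X Y i) :=
  ((Functor.FullyFaithful.ofFullyFaithful (shiftFunctor T m)).homEquiv.trans
    ((shiftFunctorAdd' T i m j hij).symm.app Y).homToEquiv).subsingleton_congr.symm

lemma isThickSubcategory_homBoundedAbove {T : Type*} [Category T] [HasZeroObject T]
    [Preadditive T] [HasShift T ℤ] [∀ n : ℤ, (shiftFunctor T n).Additive] [Pretriangulated T]
    (S : Set T) : IsThickSubcategory (homBoundedAbove S) where
  mem_of_iso e := fun ⟨n, hn⟩ =>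
    ⟨n, fun Y hY j hj => e.homFromEquiv.subsingleton_congr.1 (hn Y hY j hj)⟩
  zero_mem := ⟨0, fun _ _ _ _ => ⟨(isZero_zero T).eq_of_src⟩⟩
  shift_mem X m := fun ⟨n, hn⟩ => ⟨n + m, fun Y hY j hj =>
    (subsingleton_shiftedHom_shift_iff X Y (sub_add_cancel j m)).2 (hn Y hY (j - m) (by lia))⟩
  ext₂ := by
    rintro Δ hΔ ⟨n₁, h₁⟩ ⟨n₃, h₃⟩
    refine ⟨max n₁ n₃, fun Y hY j hj => subsingleton_of_forall_eq 0 fun f => ?_⟩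
    have := h₁ Y hY j (by lia)
    have := h₃ Y hY j (by lia)
    obtain ⟨g, rfl⟩ := Δ.yoneda_exact₂ hΔ f (Subsingleton.elim _ _)
    rw [Subsingleton.elim g 0, comp_zero]
  retract_mem := by
    rintro X X' i r hir ⟨n, hn⟩
    refine ⟨n, fun Y hY j hj => ⟨fun f g => ?_⟩⟩
    have : Epi r := (SplitEpi.mk i hir).epi
    have := hn Y hY j hj
    exact (cancel_epi r).1 (Subsingleton.elim _ _)

end BoundedAbove

section ProjectiveDimension

variable {C : Type*} [Category C] [Abelian C] [HasDerivedCategory C]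

lemma singleFunctor_obj_mem_homBoundedAbove_iff (X : C) :
    (DerivedCategory.singleFunctor C 0).obj X ∈
        homBoundedAbove (Set.range (DerivedCategory.singleFunctor C 0).obj) ↔
      ∃ n : ℕ, HasProjectiveDimensionLE X n := by
  have := hasExt_of_hasDerivedCategory C
  constructor
  · rintro ⟨n, hn⟩
    refine ⟨n.toNat, .mk fun j hj Y e => ?_⟩
    have := hn _ ⟨Y, rfl⟩ j (by lia)
    exact Abelian.Ext.homEquiv.injective (Subsingleton.elim _ _)
  · rintro ⟨n, hX⟩
    refine ⟨n, ?_⟩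
    rintro _ ⟨Y, rfl⟩ j hj
    lift j to ℕ using by lia
    exact Abelian.Ext.homEquiv.subsingleton_congr.1 (hX.subsingleton X (n + 1) j (by lia) Y)

theorem finite_proj_dim_of_small_general {G M : C} {n : ℕ} (hG : HasProjectiveDimensionLE G n)
    (h : ∀ D : Set (DerivedCategory C), IsThickSubcategory D →
      (DerivedCategory.singleFunctor C 0).obj G ∈ D →
      (DerivedCategory.singleFunctor C 0).obj M ∈ D) :
    ∃ m : ℕ, HasProjectiveDimensionLE M m :=
  (singleFunctor_obj_mem_homBoundedAbove_iff M).1 <| h _ (isThickSubcategory_homBoundedAbove _)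
    ((singleFunctor_obj_mem_homBoundedAbove_iff G).2 ⟨n, hG⟩)

end ProjectiveDimension

section ExtComparison

variable {C : Type*} [Category C] [Abelian C] {X : C}

lemma subsingleton_abelianExt_succ_iff [HasExt C] (P : ProjectiveResolution X) (Y : C) (n : ℕ) :
    Subsingleton (Abelian.Ext X Y (n + 1)) ↔
      ∀ f : P.complex.X (n + 1) ⟶ Y, P.complex.d (n + 2) (n + 1) ≫ f = 0 →
        ∃ g : P.complex.X n ⟶ Y, P.complex.d (n + 1) n ≫ g = f := by
  constructor
  · intro _ f hf
    exact (P.extMk_eq_zero_iff f (n + 2) rfl hf n rfl).1 (Subsingleton.elim _ _)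
  · refine fun h => subsingleton_of_forall_eq 0 fun α => ?_
    obtain ⟨f, hf, rfl⟩ := P.extMk_surjective α (n + 2) rfl
    exact (P.extMk_eq_zero_iff f (n + 2) rfl hf n rfl).2 (h f hf)

variable (k : Type*) [Ring k] [Linear k C] [EnoughProjectives C]

lemma subsingleton_Ext_succ_iff (P : ProjectiveResolution X) (Y : C) (n : ℕ) :
    Subsingleton (((_root_.Ext k C (n + 1)).obj (Opposite.op X)).obj Y) ↔
      ∀ f : P.complex.X (n + 1) ⟶ Y, P.complex.d (n + 2) (n + 1) ≫ f = 0 →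
        ∃ g : P.complex.X n ⟶ Y, P.complex.d (n + 1) n ≫ g = f := by
  rw [← ModuleCat.isZero_iff_subsingleton, (P.isoExt (n + 1) Y).isZero_iff,
    ← HomologicalComplex.exactAt_iff_isZero_homology,
    HomologicalComplex.exactAt_iff' _ n (n + 1) (n + 2) (by simp) (by simp),
    ShortComplex.moduleCat_exact_iff]
  rfl

lemma subsingleton_Ext_of_hasProjectiveDimensionLE {n j : ℕ} [HasProjectiveDimensionLE X n]
    (hj : n < j) (Y : C) :
    Subsingleton (((_root_.Ext k C j).obj (Opposite.op X)).obj Y) := by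
  have := HasExt.standard C
  obtain ⟨i, rfl⟩ : ∃ i, j = i + 1 := Nat.exists_eq_add_one.2 (by lia)
  rw [subsingleton_Ext_succ_iff k (projectiveResolution X),
    ← subsingleton_abelianExt_succ_iff]
  exact HasProjectiveDimensionLT.subsingleton X (n + 1) (i + 1) hj Y

end ExtComparison

/-- Lemma 3.3: if the complex `S⁰M` (`M` concentrated in degree `0`)
is a small object of `D(R)`, then `M` has finite projective dimension: there is `i` with
`Ext^j_R(M, N) = 0` for all modules `N` and all `j > i`. -/
theorem finite_proj_dim_of_small (R : Type u) [Ring R]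
    [HasDerivedCategory.{w} (ModuleCat.{u} R)]
    (M : ModuleCat.{u} R)
    (h : IsSmallObject ((DerivedCategory.singleFunctor (ModuleCat.{u} R) 0).obj M)) :
    HasFiniteProjectiveDimension R M := by
  have hR : Projective (ModuleCat.of R R) := (IsProjective.iff_projective R).1 inferInstance
  obtain ⟨n, hM⟩ :=
    finite_proj_dim_of_small_general ((projective_iff_hasProjectiveDimensionLE_zero _).1 hR) h
  exact ⟨n, fun N j hj => subsingleton_Ext_of_hasProjectiveDimensionLE ℤ hj N⟩
end

section
/- Let R be a left coherent ring and M a finitely presented left R-module of finite projective dimension. Then S^0 M (the complex M concentrated in degree 0) is a small object of D(R). -/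
open CategoryTheory CategoryTheory.Limits CategoryTheory.Pretriangulated ZeroObject

universe w u

/-!
Coherence of `R` means that finitely generated submodules of finite free modules are finitely
presented, so a finitely presented `M` has a finite free cover `F → M` with finitely presented
kernel `K`. If `M` is not projective, then `K` has smaller projective dimension than `M`, and the
triangle `S⁰K → S⁰F → S⁰M →` puts `S⁰M` in every thick subcategory containing `S⁰K` and `S⁰F`.
The induction ends at a finitely generated projective module, a direct summand of some `Rᵏ`.
-/

section PseudoCoherent

variable {R M N : Type*} [Ring R] [AddCommGroup M] [Module R M] [AddCommGroup N] [Module R N]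

/-- A module is *pseudo-coherent* (in Bourbaki's sense) if all of its finitely generated
submodules are finitely presented; the module itself need not be finitely generated. Thus `R` is
left coherent exactly when it is pseudo-coherent as a left module over itself. -/
def IsPseudoCoherent (R M : Type*) [Ring R] [AddCommGroup M] [Module R M] : Prop :=
  ∀ K : Submodule R M, K.FG → Module.FinitePresentation R K

namespace IsPseudoCoherent

theorem of_subsingleton [Subsingleton M] : IsPseudoCoherent R M := fun _ _ ↦ inferInstance

theorem finitePresentation [Module.Finite R M] (hM : IsPseudoCoherent R M) :
    Module.FinitePresentation R M :=
  Submodule.topEquiv.finitePresentation_iff.1 (hM ⊤ Module.Finite.fg_top)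

theorem of_injective (hN : IsPseudoCoherent R N) (f : M →ₗ[R] N) (hf : Function.Injective f) :
    IsPseudoCoherent R M := fun K hK ↦
  (K.equivMapOfInjective f hf).finitePresentation_iff.2 (hN _ (hK.map f))

theorem of_ker (f : M →ₗ[R] N) (hker : IsPseudoCoherent R (LinearMap.ker f))
    (hN : IsPseudoCoherent R N) : IsPseudoCoherent R M := by
  intro K hK
  have : Module.Finite R K := Module.Finite.iff_fg.2 hK
  let g : K →ₗ[R] LinearMap.range (f.domRestrict K) := (f.domRestrict K).rangeRestrict
  have hg : Function.Surjective g := LinearMap.surjective_rangeRestrict _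
  have : Module.FinitePresentation R (LinearMap.range (f.domRestrict K)) :=
    hN _ (Module.Finite.iff_fg.1 inferInstance)
  have : Module.Finite R (LinearMap.ker g) :=
    Module.Finite.iff_fg.2 (Module.FinitePresentation.fg_ker g hg)
  have : Module.FinitePresentation R (LinearMap.ker g) := by
    let j : LinearMap.ker g →ₗ[R] LinearMap.ker f :=
      K.subtype.restrict fun x hx ↦ congrArg Subtype.val hx
    have hj : Function.Injective j := .of_comp (f := (LinearMap.ker f).subtype)
      (K.injective_subtype.comp (LinearMap.ker g).injective_subtype)
    exact (hker.of_injective j hj).finitePresentation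
  exact Module.finitePresentation_of_ker g hg

theorem prod (hM : IsPseudoCoherent R M) (hN : IsPseudoCoherent R N) :
    IsPseudoCoherent R (M × N) := by
  refine of_ker (LinearMap.snd R M N) ?_ hN
  refine hM.of_injective ((LinearMap.fst R M N).domRestrict _) fun x y hxy ↦ ?_
  exact Subtype.ext (Prod.ext hxy (x.2.trans y.2.symm))

theorem pi {ι : Type*} [Finite ι] {M : ι → Type*} [∀ i, AddCommGroup (M i)]
    [∀ i, Module R (M i)] (hM : ∀ i, IsPseudoCoherent R (M i)) : IsPseudoCoherent R (∀ i, M i) :=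
  Module.pi_induction' R (fun N _ _ ↦ IsPseudoCoherent R N) (fun N _ _ ↦ IsPseudoCoherent R N)
    (fun e hN ↦ hN.of_injective e.symm.toLinearMap e.symm.injective)
    (fun e hN ↦ hN.of_injective e.symm.toLinearMap e.symm.injective)
    of_subsingleton (fun hN hN' ↦ hN.prod hN') M hM

theorem finitePresentation_ker [Module.Finite R M] [Module.FinitePresentation R N]
    (hM : IsPseudoCoherent R M) (f : M →ₗ[R] N) (hf : Function.Surjective f) :
    Module.FinitePresentation R (LinearMap.ker f) :=
  hM _ (Module.FinitePresentation.fg_ker f hf)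

end IsPseudoCoherent

end PseudoCoherent

theorem IsLeftCoherentRing.exists_shortExact_projective {R : Type u} [Ring R]
    (hR : IsLeftCoherentRing R) {M : ModuleCat.{u} R} (hM : M ∈ finPresModules R) :
    ∃ S : ShortComplex (ModuleCat.{u} R), S.X₃ = M ∧ S.ShortExact ∧ Projective S.X₂ ∧
      S.X₁ ∈ finPresModules R ∧ S.X₂ ∈ finPresModules R := by
  have : Module.FinitePresentation R M := hM
  obtain ⟨k, f, hf⟩ := Module.Finite.exists_fin' R M
  have hF : IsPseudoCoherent R (Fin k → R) := .pi fun _ ↦ hR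
  have hproj : Module.Projective R (Fin k → R) := inferInstance
  exact ⟨f.shortComplexKer, rfl, LinearMap.shortExact_shortComplexKer hf,
    (IsProjective.iff_projective _).1 hproj, hF.finitePresentation_ker f hf,
    hF.finitePresentation⟩

section ProjectiveDimension

variable {C : Type*} [Category C] [Abelian C] {X : C}

theorem subsingleton_abelianExt_succ_iff_exactAt_linearYonedaObj [HasExt.{w} C] (A : Type*)
    [Ring A] [Linear A C] (P : ProjectiveResolution X) (Y : C) (n : ℕ) :
    Subsingleton (Abelian.Ext X Y (n + 1)) ↔
      (P.complex.linearYonedaObj A Y).ExactAt (n + 1) := by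
  have hexact : (P.complex.linearYonedaObj A Y).ExactAt (n + 1) ↔
      ∀ f : P.complex.X (n + 1) ⟶ Y, P.complex.d (n + 2) (n + 1) ≫ f = 0 →
        ∃ g : P.complex.X n ⟶ Y, P.complex.d (n + 1) n ≫ g = f := by
    rw [HomologicalComplex.exactAt_iff' _ n (n + 1) (n + 2) (by simp) (by simp),
      ShortComplex.moduleCat_exact_iff]
    rfl
  rw [hexact, subsingleton_iff_forall_eq 0]
  constructor
  · intro h f hf
    exact (P.extMk_eq_zero_iff f (n + 2) rfl hf n rfl).1 (h _)
  · intro h e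
    obtain ⟨f, hf, rfl⟩ := P.extMk_surjective e (n + 2) rfl
    exact (P.extMk_eq_zero_iff f (n + 2) rfl hf n rfl).2 (h f hf)

theorem subsingleton_abelianExt_succ_iff_s8 [HasExt.{w} C] [EnoughProjectives C] (A : Type*)
    [Ring A] [Linear A C] (Y : C) (n : ℕ) :
    Subsingleton (Abelian.Ext X Y (n + 1)) ↔
      Subsingleton (((_root_.Ext A C (n + 1)).obj (Opposite.op X)).obj Y) := by
  let P := ProjectiveResolution.of X
  rw [subsingleton_abelianExt_succ_iff_exactAt_linearYonedaObj A P,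
    HomologicalComplex.exactAt_iff_isZero_homology, ← (P.isoExt (n + 1) Y).isZero_iff,
    ModuleCat.isZero_iff_subsingleton]

theorem hasProjectiveDimensionLE_iff_subsingleton_ext [EnoughProjectives C] (A : Type*)
    [Ring A] [Linear A C] (n : ℕ) :
    HasProjectiveDimensionLE X n ↔ ∀ (Y : C) (j : ℕ), n < j →
      Subsingleton (((_root_.Ext A C j).obj (Opposite.op X)).obj Y) := by
  let := HasExt.standard C
  constructor
  · rintro hX Y (_ | j) hj
    · exact absurd hj (Nat.not_lt_zero n)
    · exact (subsingleton_abelianExt_succ_iff_s8 A Y j).1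
        (HasProjectiveDimensionLT.subsingleton X (n + 1) (j + 1) hj Y)
  · intro h
    refine HasProjectiveDimensionLT.mk ?_
    rintro (_ | j) hj Y e
    · exact absurd hj (Nat.not_succ_le_zero n)
    · have := (subsingleton_abelianExt_succ_iff_s8 A Y j).2 (h Y (j + 1) hj)
      exact Subsingleton.elim e 0

end ProjectiveDimension

theorem hasFiniteProjectiveDimension_iff {R : Type u} [Ring R] (M : ModuleCat.{u} R) :
    HasFiniteProjectiveDimension R M ↔ ∃ n : ℕ, HasProjectiveDimensionLE M n :=
  exists_congr fun n ↦ (hasProjectiveDimensionLE_iff_subsingleton_ext ℤ n).symm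

namespace IsThickSubcategory

section Triangulated

variable {T : Type*} [Category T] [HasZeroObject T] [Preadditive T] [HasShift T ℤ]
  [∀ n : ℤ, (shiftFunctor T n).Additive] [Pretriangulated T] {D : Set T}

theorem mem_of_isZero (hD : IsThickSubcategory D) {X : T} (hX : IsZero X) : X ∈ D :=
  hD.mem_of_iso hX.isoZero.symm hD.zero_mem

theorem ext₃ (hD : IsThickSubcategory D) {T' : Triangle T} (hT' : T' ∈ distTriang T)
    (h₁ : T'.obj₁ ∈ D) (h₂ : T'.obj₂ ∈ D) : T'.obj₃ ∈ D :=
  hD.ext₂ _ (rot_of_distTriang _ hT') h₂ (hD.shift_mem _ 1 h₁)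

end Triangulated

end IsThickSubcategory

section Stalk

variable {C : Type*} [Category C] [Abelian C] [HasDerivedCategory.{w} C]

/-- The objects `X` of an abelian category whose stalk complex `S⁰X` lies in a given set `D` of
objects of the derived category. It is used to carry out dévissage in the abelian category. -/
def stalkPreimage (D : Set (DerivedCategory C)) : Set C :=
  (DerivedCategory.singleFunctor C 0).obj ⁻¹' D

namespace IsThickSubcategory

variable {D : Set (DerivedCategory C)} {X Y : C} {S : ShortComplex C}

theorem stalkPreimage_mem_of_iso (hD : IsThickSubcategory D) (e : X ≅ Y)
    (hX : X ∈ stalkPreimage D) : Y ∈ stalkPreimage D :=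
  hD.mem_of_iso ((DerivedCategory.singleFunctor C 0).mapIso e) hX

theorem stalkPreimage_mem_of_isZero (hD : IsThickSubcategory D) (hX : IsZero X) :
    X ∈ stalkPreimage D :=
  hD.mem_of_isZero ((DerivedCategory.singleFunctor C 0).map_isZero hX)

theorem stalkPreimage_mem_of_retract (hD : IsThickSubcategory D) (r : Retract X Y)
    (hY : Y ∈ stalkPreimage D) : X ∈ stalkPreimage D :=
  let r' := r.map (DerivedCategory.singleFunctor C 0)
  hD.retract_mem _ _ r'.i r'.r r'.retract hY

theorem stalkPreimage_mem_X₂ (hD : IsThickSubcategory D) (hS : S.ShortExact)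
    (h₁ : S.X₁ ∈ stalkPreimage D) (h₃ : S.X₃ ∈ stalkPreimage D) : S.X₂ ∈ stalkPreimage D :=
  hD.ext₂ _ hS.singleTriangle_distinguished h₁ h₃

theorem stalkPreimage_mem_X₃ (hD : IsThickSubcategory D) (hS : S.ShortExact)
    (h₁ : S.X₁ ∈ stalkPreimage D) (h₂ : S.X₂ ∈ stalkPreimage D) : S.X₃ ∈ stalkPreimage D :=
  hD.ext₃ hS.singleTriangle_distinguished h₁ h₂

theorem stalkPreimage_mem_of_hasProjectiveDimensionLE (hD : IsThickSubcategory D) {A : Set C}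
    (hA : ∀ X ∈ A, ∃ S : ShortComplex C, S.X₃ = X ∧ S.ShortExact ∧ Projective S.X₂ ∧
      S.X₁ ∈ A ∧ S.X₂ ∈ A)
    (hproj : ∀ X ∈ A, Projective X → X ∈ stalkPreimage D) (n : ℕ) (hX : X ∈ A)
    (hn : HasProjectiveDimensionLE X n) : X ∈ stalkPreimage D := by
  induction n generalizing X with
  | zero => exact hproj X hX ((projective_iff_hasProjectiveDimensionLE_zero X).2 hn)
  | succ n ih =>
    obtain ⟨S, rfl, hS, hS₂, hS₁A, hS₂A⟩ := hA X hX
    have hS₁ : HasProjectiveDimensionLE S.X₁ n := (hS.hasProjectiveDimensionLT_X₃_iff n hS₂).1 hn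
    exact hD.stalkPreimage_mem_X₃ hS (ih hS₁A hS₁) (hproj _ hS₂A hS₂)

end IsThickSubcategory

end Stalk

namespace IsThickSubcategory

section Products

variable {R : Type*} [Ring R] [HasDerivedCategory.{w} (ModuleCat.{u} R)]
  {D : Set (DerivedCategory (ModuleCat.{u} R))}

theorem stalkPreimage_mem_prod (hD : IsThickSubcategory D) {M N : Type u} [AddCommGroup M]
    [Module R M] [AddCommGroup N] [Module R N] (hM : ModuleCat.of R M ∈ stalkPreimage D)
    (hN : ModuleCat.of R N ∈ stalkPreimage D) : ModuleCat.of R (M × N) ∈ stalkPreimage D :=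
  let S : ShortComplex (ModuleCat.{u} R) := ModuleCat.shortComplexOfCompEqZero
    (LinearMap.inl R M N) (LinearMap.snd R M N) (LinearMap.snd_comp_inl R M N)
  have hS : S.ShortExact := ModuleCat.shortComplex_shortExact S Function.Exact.inl_snd
    LinearMap.inl_injective LinearMap.snd_surjective
  hD.stalkPreimage_mem_X₂ hS hM hN

theorem stalkPreimage_mem_pi (hD : IsThickSubcategory D) {ι : Type} [Finite ι] {M : ι → Type u}
    [∀ i, AddCommGroup (M i)] [∀ i, Module R (M i)]
    (hM : ∀ i, ModuleCat.of R (M i) ∈ stalkPreimage D) :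
    ModuleCat.of R (∀ i, M i) ∈ stalkPreimage D :=
  Module.pi_induction' R (fun N _ _ ↦ ModuleCat.of R N ∈ stalkPreimage D)
    (fun N _ _ ↦ ModuleCat.of R N ∈ stalkPreimage D)
    (fun e hN ↦ hD.stalkPreimage_mem_of_iso e.toModuleIso hN)
    (fun e hN ↦ hD.stalkPreimage_mem_of_iso e.toModuleIso hN)
    (hD.stalkPreimage_mem_of_isZero (ModuleCat.isZero_of_subsingleton _))
    (fun hN hN' ↦ hD.stalkPreimage_mem_prod hN hN') M hM

end Products

theorem stalkPreimage_mem_of_projective {R : Type u} [Ring R]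
    [HasDerivedCategory.{w} (ModuleCat.{u} R)] {D : Set (DerivedCategory (ModuleCat.{u} R))}
    (hD : IsThickSubcategory D)
    (hR : ModuleCat.of R R ∈ stalkPreimage D) (M : ModuleCat.{u} R) [Module.Finite R M]
    [Projective M] : M ∈ stalkPreimage D := by
  have : Module.Projective R M := (IsProjective.iff_projective _).2 ‹Projective M›
  obtain ⟨k, f, g, -, -, hfg⟩ := Module.Finite.exists_comp_eq_id_of_projective R M
  have r : Retract M (ModuleCat.of R (Fin k → R)) :=
    ⟨ModuleCat.ofHom g, ModuleCat.ofHom f, ModuleCat.hom_ext hfg⟩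
  exact hD.stalkPreimage_mem_of_retract r (hD.stalkPreimage_mem_pi fun _ ↦ hR)

end IsThickSubcategory

/-- Proposition 3.4: over a left coherent ring `R`, if `M` is a
finitely presented module of finite projective dimension, then the complex `S⁰M`
(`M` concentrated in degree `0`) is a small object of `D(R)`. -/
theorem small_of_finPres_finite_proj_dim (R : Type u) [Ring R]
    [HasDerivedCategory.{w} (ModuleCat.{u} R)]
    (hR : IsLeftCoherentRing R) (M : ModuleCat.{u} R)
    (hfp : Module.FinitePresentation R M)
    (hpd : HasFiniteProjectiveDimension R M) :
    IsSmallObject ((DerivedCategory.singleFunctor (ModuleCat.{u} R) 0).obj M) := by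
  intro D hD hRD
  obtain ⟨n, hn⟩ := (hasFiniteProjectiveDimension_iff M).1 hpd
  refine hD.stalkPreimage_mem_of_hasProjectiveDimensionLE (A := finPresModules R)
    (fun _ ↦ hR.exists_shortExact_projective) ?_ n hfp hn
  intro P hP hproj
  have : Module.FinitePresentation R P := hP
  exact hD.stalkPreimage_mem_of_projective hRD P
end
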